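/- Let T = { x ∈ ℝⁿ : f₁(x) = ⋯ = f_{m₁}(x) = 0, h₁(x) ≥ 0, …, h_{m₂}(x) ≥ 0 } be a compact set defined by real polynomials fᵢ, hⱼ. If T satisfies the positive definite Lagrange Hessian (PDLH) condition at every u ∈ ∂_cT, then conv(T) is SDP representable. -/

import Mathlib

open MvPolynomial Metric Set Pointwise Filter

noncomputable section

/-- `ℝⁿ` with the Euclidean norm. -/
abbrev Rn (n : ℕ) : Type := EuclideanSpace ℝ (Fin n)

/-- A set `S ⊆ ℝⁿ` is SDP representable if it is the projection of a spectrahedron: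
there are symmetric matrices `A₀, A i, B j` with
`S = { x | ∃ u, A₀ + Σ xᵢ Aᵢ + Σ uⱼ Bⱼ ⪰ 0 }`. -/
def IsSDPRepresentable {n : ℕ} (S : Set (Rn n)) : Prop :=
  ∃ (N d : ℕ) (A₀ : Matrix (Fin d) (Fin d) ℝ)
    (A : Fin n → Matrix (Fin d) (Fin d) ℝ) (B : Fin N → Matrix (Fin d) (Fin d) ℝ),
    A₀.IsSymm ∧ (∀ i, (A i).IsSymm) ∧ (∀ j, (B j).IsSymm) ∧
    S = {x : Rn n | ∃ u : Fin N → ℝ,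
      (A₀ + ∑ i, x i • A i + ∑ j, u j • B j).PosSemidef}

/-- Evaluation of a polynomial at a point of `ℝⁿ`. -/
def peval {n : ℕ} (g : MvPolynomial (Fin n) ℝ) (x : Rn n) : ℝ :=
  MvPolynomial.eval (fun i => x i) g

/-- The gradient `∇g(u)` of a polynomial. -/
def pgrad {n : ℕ} (g : MvPolynomial (Fin n) ℝ) (u : Rn n) : Fin n → ℝ :=
  fun i => MvPolynomial.eval (fun j => u j) (MvPolynomial.pderiv i g)

/-- The Hessian `∇²g(u)` of a polynomial. -/
def phess {n : ℕ} (g : MvPolynomial (Fin n) ℝ) (u : Rn n) : Matrix (Fin n) (Fin n) ℝ :=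
  Matrix.of fun i j =>
    MvPolynomial.eval (fun k => u k) (MvPolynomial.pderiv i (MvPolynomial.pderiv j g))

/-- A polynomial `g` is sos-concave if `-∇²g(x) = W(x)ᵀ W(x)` for some
(possibly nonsquare) matrix polynomial `W`. -/
def SosConcave {n : ℕ} (g : MvPolynomial (Fin n) ℝ) : Prop :=
  ∃ (k : ℕ) (W : Fin k → Fin n → MvPolynomial (Fin n) ℝ),
    ∀ i j, - MvPolynomial.pderiv i (MvPolynomial.pderiv j g) = ∑ l, W l i * W l j

/-- `g` is quasi-concave at `u` : `-vᵀ∇²g(u)v ≥ 0` for every `v` with `∇g(u)ᵀv = 0`. -/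
def QuasiConcaveAt {n : ℕ} (g : MvPolynomial (Fin n) ℝ) (u : Rn n) : Prop :=
  ∀ v : Fin n → ℝ, (∑ i, pgrad g u i * v i) = 0 →
    0 ≤ -(∑ i, ∑ j, v i * phess g u i j * v j)

/-- `g` is strictly quasi-concave at `u` : if `∇g(u) ≠ 0` then `-vᵀ∇²g(u)v > 0`
for all nonzero `v ⊥ ∇g(u)`; if `∇g(u) = 0` then `-∇²g(u)` is positive definite. -/
def StrictlyQuasiConcaveAt {n : ℕ} (g : MvPolynomial (Fin n) ℝ) (u : Rn n) : Prop :=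
  (pgrad g u ≠ 0 ∧ ∀ v : Fin n → ℝ, v ≠ 0 → (∑ i, pgrad g u i * v i) = 0 →
      0 < -(∑ i, ∑ j, v i * phess g u i j * v j)) ∨
  (pgrad g u = 0 ∧ (-(phess g u)).PosDef)

/-- The convex boundary `∂_c T` : points of `T` minimizing some unit linear functional. -/
def convexBoundary {n : ℕ} (T : Set (Rn n)) : Set (Rn n) :=
  {u ∈ T | ∃ l : Rn n, ‖l‖ = 1 ∧ ∀ x ∈ T, (∑ i, l i * u i) ≤ ∑ i, l i * x i}

/-- `v` is a nonsingular point of `∂T` (w.r.t. defining polynomials `g`):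
exactly one defining polynomial vanishes at `v`, with nonvanishing gradient. -/
def IsNonsingularBoundaryPoint {n m : ℕ} (g : Fin m → MvPolynomial (Fin n) ℝ)
    (T : Set (Rn n)) (v : Rn n) : Prop :=
  v ∈ frontier T ∧ ∃ i, peval (g i) v = 0 ∧ pgrad (g i) v ≠ 0 ∧
    ∀ j, peval (g j) v = 0 → j = i

/-- A polynomial is SOS if it is a finite sum of squares of polynomials. -/
def IsSOSPoly {n : ℕ} (p : MvPolynomial (Fin n) ℝ) : Prop :=
  ∃ (k : ℕ) (q : Fin k → MvPolynomial (Fin n) ℝ), p = ∑ i, (q i) ^ 2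

/-- The polynomial `δ² - ‖x - u‖²`. -/
def ballPoly {n : ℕ} (u : Rn n) (δ : ℝ) : MvPolynomial (Fin n) ℝ :=
  MvPolynomial.C (δ ^ 2) - ∑ i, (MvPolynomial.X i - MvPolynomial.C (u i)) ^ 2

/-- The family `h₁, …, h_{m₂}` extended by the ball polynomial `h_m(x) = δ² - ‖x-u‖²`. -/
def extFamily {n m2 : ℕ} (h : Fin m2 → MvPolynomial (Fin n) ℝ) (u : Rn n) (δ : ℝ) :
    Fin (m2 + 1) → MvPolynomial (Fin n) ℝ :=
  Fin.snoc h (ballPoly u δ)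

/-- The positive definite Lagrange Hessian (PDLH) condition at `u` with radius `δu`,
for the set `T = {x | f(x) = 0, h(x) ≥ 0}`. -/
def PDLHAt {n m1 m2 : ℕ} (f : Fin m1 → MvPolynomial (Fin n) ℝ)
    (h : Fin m2 → MvPolynomial (Fin n) ℝ) (T : Set (Rn n)) (u : Rn n) (δu : ℝ) : Prop :=
  ∀ l : Rn n, ‖l‖ = 1 → ∀ δ : ℝ, 0 < δ → δ ≤ δu →
    ∀ v ∈ T ∩ closedBall u δ,
      (∀ x ∈ T ∩ closedBall u δ, (∑ i, l i * v i) ≤ ∑ i, l i * x i) →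
      ∃ (lam : Fin m1 → ℝ) (mu : Fin (m2 + 1) → ℝ),
        (∀ j, 0 ≤ mu j) ∧
        (∀ j, mu j * peval (extFamily h u δ j) v = 0) ∧
        (∀ i, l i = (∑ k, lam k * pgrad (f k) v i) +
            ∑ j, mu j * pgrad (extFamily h u δ j) v i) ∧
        ∀ x ∈ closedBall u δ,
          (Matrix.of (fun i i' : Fin n =>
            -(∑ k, lam k * phess (f k) x i i') -
              ∑ j, mu j * phess (extFamily h u δ j) x i i')).PosDef

/-- `Z(g) ∩ ∂S` has strictly convex shape with respect to `S`. -/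
def StrictlyConvexShape {n : ℕ} (g : MvPolynomial (Fin n) ℝ) (S : Set (Rn n)) : Prop :=
  ∃ Y U : Set (Rn n), IsOpen U ∧ Y = {x | peval g x = 0} ∩ U ∧
    {x | peval g x = 0} ∩ frontier S ⊆ Y ∧
    (∀ p ∈ closure Y, pgrad g p ≠ 0) ∧
    ∀ p ∈ closure Y,
      (∃ ε : ℝ, (ε = 1 ∨ ε = -1) ∧
        ∀ q ∈ S ∪ closure Y, ε * (∑ i, pgrad g p i * (q i - p i)) ≤ 0) ∧
      ∀ q ∈ S ∪ closure Y, (∑ i, pgrad g p i * (q i - p i)) = 0 → q = p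


/-! ### Calculus of SDP-representable sets in coordinate-free form -/

/-- Coordinate-free SDP representability. -/
def SDR {E : Type} [AddCommGroup E] [Module ℝ E] (S : Set E) : Prop :=
  ∃ (F W : Type) (_ : AddCommGroup F) (_ : Module ℝ F) (_ : Module.Finite ℝ F)
    (_ : AddCommGroup W) (_ : Module ℝ W) (_ : Module.Finite ℝ W)
    (a : W →ₗ[ℝ] W →ₗ[ℝ] ℝ) (A : E →ₗ[ℝ] W →ₗ[ℝ] W →ₗ[ℝ] ℝ) (B : F →ₗ[ℝ] W →ₗ[ℝ] W →ₗ[ℝ] ℝ),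
    ∀ x, x ∈ S ↔ ∃ u : F, ∀ w, 0 ≤ a w w + A x w w + B u w w

section SDRcalc

variable {E : Type} [AddCommGroup E] [Module ℝ E]

theorem SDR.basic {W : Type} [AddCommGroup W] [Module ℝ W] [Module.Finite ℝ W]
    (a : W →ₗ[ℝ] W →ₗ[ℝ] ℝ) (A : E →ₗ[ℝ] W →ₗ[ℝ] W →ₗ[ℝ] ℝ) :
    SDR {x : E | ∀ w, 0 ≤ a w w + A x w w} :=
  ⟨PUnit, W, inferInstance, inferInstance, inferInstance, inferInstance, inferInstance,
    inferInstance, a, A, 0, fun x => by simp⟩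

theorem SDR.halfspace (c : ℝ) (φ : E →ₗ[ℝ] ℝ) : SDR {x : E | 0 ≤ c + φ x} := by
  have := SDR.basic (E := E) (W := ℝ) (c • LinearMap.mul ℝ ℝ)
    ((LinearMap.toSpanSingleton ℝ _ (LinearMap.mul ℝ ℝ)).comp φ)
  convert this using 1
  ext x
  simp only [mem_ofPred_eq, LinearMap.smul_apply, LinearMap.mul_apply', smul_eq_mul,
    LinearMap.comp_apply, LinearMap.toSpanSingleton_apply]
  constructor
  · intro h w
    nlinarith [mul_self_nonneg w]
  · intro h
    simpa using h 1

theorem SDR.inter {S T : Set E} (hS : SDR S) (hT : SDR T) : SDR (S ∩ T) := by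
  obtain ⟨F, W, _, _, _, _, _, _, a, A, B, h⟩ := hS
  obtain ⟨F', W', _, _, _, _, _, _, a', A', B', h'⟩ := hT
  refine ⟨F × F', W × W', inferInstance, inferInstance, inferInstance, inferInstance,
    inferInstance, inferInstance,
    a.compl₁₂ (LinearMap.fst ℝ W W') (LinearMap.fst ℝ W W') +
      a'.compl₁₂ (LinearMap.snd ℝ W W') (LinearMap.snd ℝ W W'),
    LinearMap.mk₂ ℝ (fun x w => (A x w.1).comp (LinearMap.fst ℝ W W') +
      (A' x w.2).comp (LinearMap.snd ℝ W W')) ?_ ?_ ?_ ?_,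
    LinearMap.mk₂ ℝ (fun x w => (B x.1 w.1).comp (LinearMap.fst ℝ W W') +
      (B' x.2 w.2).comp (LinearMap.snd ℝ W W')) ?_ ?_ ?_ ?_, ?_⟩
  any_goals
    intros
    ext <;> simp
  intro x
  rw [mem_inter_iff, h, h']
  simp only [LinearMap.add_apply, LinearMap.compl₁₂_apply, LinearMap.mk₂_apply,
    LinearMap.comp_apply, LinearMap.fst_apply, LinearMap.snd_apply]
  constructor
  · rintro ⟨⟨u, hu⟩, ⟨u', hu'⟩⟩
    refine ⟨(u, u'), fun w => ?_⟩
    have := hu w.1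
    have := hu' w.2
    simp only
    linarith
  · rintro ⟨u, hu⟩
    refine ⟨⟨u.1, fun w => ?_⟩, ⟨u.2, fun w => ?_⟩⟩
    · simpa using hu (w, 0)
    · simpa using hu (0, w)

theorem SDR.univ : SDR (Set.univ : Set E) := by
  have := SDR.halfspace (E := E) 0 0
  simpa using this

theorem SDR.biInter {ι : Type*} (s : Finset ι) (S : ι → Set E) (h : ∀ i ∈ s, SDR (S i)) :
    SDR (⋂ i ∈ s, S i) := by
  classical
  induction s using Finset.induction_on with
  | empty => simpa using SDR.univ
  | insert a s ha ih =>
    rw [Finset.set_biInter_insert]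
    exact (h a (by simp)).inter (ih fun i hi => h i (by simp [hi]))

theorem SDR.hyperplane (c : ℝ) (φ : E →ₗ[ℝ] ℝ) : SDR {x : E | φ x = c} := by
  have := (SDR.halfspace (-c) φ).inter (SDR.halfspace c (-φ))
  convert this using 1
  ext x
  simp only [mem_ofPred_eq, mem_inter_iff, LinearMap.neg_apply]
  constructor
  · intro h; constructor <;> linarith
  · rintro ⟨h, h'⟩; linarith

theorem SDR.proj {G : Type} [AddCommGroup G] [Module ℝ G] [Module.Finite ℝ G] {S : Set (E × G)}
    (hS : SDR S) : SDR {x : E | ∃ g, (x, g) ∈ S} := by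
  obtain ⟨F, W, _, _, _, _, _, _, a, A, B, h⟩ := hS
  refine ⟨G × F, W, inferInstance, inferInstance, inferInstance, inferInstance,
    inferInstance, inferInstance, a, A.comp (LinearMap.inl ℝ E G),
    (A.comp (LinearMap.inr ℝ E G)).coprod B, fun x => ?_⟩
  have key : ∀ g : G, A (x, g) = A (x, 0) + A (0, g) := fun g => by
    rw [← map_add]; simp
  rw [mem_ofPred_eq]
  constructor
  · rintro ⟨g, hg⟩
    obtain ⟨u, hu⟩ := (h _).1 hg
    refine ⟨(g, u), fun w => ?_⟩
    have := hu w
    rw [key] at this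
    simp only [LinearMap.add_apply, LinearMap.comp_apply, LinearMap.inl_apply,
      LinearMap.coprod_apply, LinearMap.inr_apply] at this ⊢
    linarith
  · rintro ⟨⟨g, u⟩, hu⟩
    refine ⟨g, (h _).2 ⟨u, fun w => ?_⟩⟩
    have := hu w
    rw [key]
    simp only [LinearMap.add_apply, LinearMap.comp_apply, LinearMap.inl_apply,
      LinearMap.coprod_apply, LinearMap.inr_apply] at this ⊢
    linarith

theorem SDR.empty : SDR (∅ : Set E) := by
  have := SDR.halfspace (E := E) (-1) 0
  convert this using 1
  ext x
  simp

theorem SDR.singleton {n : ℕ} (x : Rn n) : SDR ({x} : Set (Rn n)) := by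
  have := SDR.biInter (E := Rn n) (Finset.univ : Finset (Fin n))
    (fun i => {y | (LinearMap.proj i ∘ₗ (WithLp.linearEquiv 2 ℝ (Fin n → ℝ)).toLinearMap) y = x i})
    (fun i _ => SDR.hyperplane _ _)
  convert this using 1
  ext y
  simp only [mem_singleton_iff, LinearMap.comp_apply, Finset.mem_univ, iInter_true, mem_iInter,
    mem_ofPred_eq]
  constructor
  · rintro rfl i; simp
  · intro h
    ext i
    simpa using h i

theorem SDR.subsingleton {n : ℕ} {S : Set (Rn n)} (hS : S.Subsingleton) : SDR S := by
  rcases hS.eq_empty_or_singleton with rfl | ⟨x, rfl⟩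
  · exact SDR.empty
  · exact SDR.singleton x

theorem SDR.convex {S : Set E} (hS : SDR S) : Convex ℝ S := by
  obtain ⟨F, W, _, _, _, _, _, _, a, A, B, h⟩ := hS
  intro x hx y hy s t hs ht hst
  rw [h] at hx hy ⊢
  obtain ⟨u, hu⟩ := hx
  obtain ⟨v, hv⟩ := hy
  refine ⟨s • u + t • v, fun w => ?_⟩
  have h1 := mul_nonneg hs (hu w)
  have h2 := mul_nonneg ht (hv w)
  simp only [map_add, map_smul, LinearMap.add_apply, LinearMap.smul_apply, smul_eq_mul]
  have : t = 1 - s := by linarith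
  subst this
  nlinarith

theorem sdr_recession {n : ℕ} {F W : Type} [AddCommGroup F] [Module ℝ F]
    [AddCommGroup W] [Module ℝ W] {S : Set (Rn n)} (hne : S.Nonempty)
    (bS : Bornology.IsBounded S)
    (a : W →ₗ[ℝ] W →ₗ[ℝ] ℝ) (A : Rn n →ₗ[ℝ] W →ₗ[ℝ] W →ₗ[ℝ] ℝ) (B : F →ₗ[ℝ] W →ₗ[ℝ] W →ₗ[ℝ] ℝ)
    (h : ∀ x, x ∈ S ↔ ∃ u : F, ∀ w, 0 ≤ a w w + A x w w + B u w w)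
    (y : Rn n) (u : F) (hy : ∀ w, 0 ≤ A y w w + B u w w) : y = 0 := by
  obtain ⟨x, hx⟩ := hne
  obtain ⟨R, hR⟩ := isBounded_iff_forall_norm_le.1 bS
  obtain ⟨u0, hu0⟩ := (h x).1 hx
  by_contra hne
  have hpos : 0 < ‖y‖ := norm_pos_iff.2 hne
  have hmem : ∀ t : ℝ, 0 ≤ t → x + t • y ∈ S := fun t ht => by
    refine (h _).2 ⟨u0 + t • u, fun w => ?_⟩
    have h1 := hu0 w
    have h2 := mul_nonneg ht (hy w)
    simp only [map_add, map_smul, LinearMap.add_apply, LinearMap.smul_apply, smul_eq_mul]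
    nlinarith
  have hR0 : 0 ≤ R := (norm_nonneg x).trans (hR x hx)
  have ht : 0 ≤ (2 * R + 1) / ‖y‖ := by positivity
  have h1 := hR _ (hmem _ ht)
  have h2 : ‖((2 * R + 1) / ‖y‖) • y‖ ≤ ‖x + ((2 * R + 1) / ‖y‖) • y‖ + ‖x‖ := by
    have := norm_sub_le (x + ((2 * R + 1) / ‖y‖) • y) x
    simpa using this
  rw [norm_smul, Real.norm_of_nonneg ht, div_mul_cancel₀ _ hpos.ne'] at h2
  have h3 := hR x hx
  linarith

theorem SDR.convexJoin {n : ℕ} {S T : Set (Rn n)} (hS : SDR S) (hT : SDR T)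
    (bS : Bornology.IsBounded S) (bT : Bornology.IsBounded T) :
    SDR (convexHull ℝ (S ∪ T)) := by
  rcases S.eq_empty_or_nonempty with rfl | neS
  · simpa [hT.convex.convexHull_eq] using hT
  rcases T.eq_empty_or_nonempty with rfl | neT
  · simpa [hS.convex.convexHull_eq] using hS
  have cS := hS.convex
  have cT := hT.convex
  obtain ⟨F, W, _, _, _, _, _, _, a, A, B, h⟩ := hS
  obtain ⟨F', W', _, _, _, _, _, _, a', A', B', h'⟩ := hT
  let pr : Rn n × (Rn n × ℝ × F × F') →ₗ[ℝ] (Rn n × ℝ × F × F') := LinearMap.snd ℝ _ _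
  let py : Rn n × (Rn n × ℝ × F × F') →ₗ[ℝ] Rn n := (LinearMap.fst ℝ _ _).comp pr
  let pl : Rn n × (Rn n × ℝ × F × F') →ₗ[ℝ] ℝ :=
    (LinearMap.fst ℝ _ _).comp ((LinearMap.snd ℝ _ _).comp pr)
  let pu : Rn n × (Rn n × ℝ × F × F') →ₗ[ℝ] F :=
    (LinearMap.fst ℝ _ _).comp ((LinearMap.snd ℝ _ _).comp ((LinearMap.snd ℝ _ _).comp pr))
  let pu' : Rn n × (Rn n × ℝ × F × F') →ₗ[ℝ] F' :=
    (LinearMap.snd ℝ _ _).comp ((LinearMap.snd ℝ _ _).comp ((LinearMap.snd ℝ _ _).comp pr))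
  let px : Rn n × (Rn n × ℝ × F × F') →ₗ[ℝ] Rn n := LinearMap.fst ℝ _ _
  have h1 := SDR.basic (E := Rn n × (Rn n × ℝ × F × F')) 0
    ((LinearMap.toSpanSingleton ℝ _ a).comp pl + A.comp py + B.comp pu)
  have h2 := SDR.basic (E := Rn n × (Rn n × ℝ × F × F')) a'
    ((LinearMap.toSpanSingleton ℝ _ a').comp (-pl) + A'.comp (px - py) + B'.comp pu')
  have h3 := SDR.halfspace 0 pl
  have h4 := SDR.halfspace 1 (-pl)
  have := (((h1.inter h2).inter h3).inter h4).proj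
  convert this using 1
  ext x
  rw [convexHull_union neS neT, cS.convexHull_eq, cT.convexHull_eq, mem_convexJoin]
  simp only [mem_inter_iff, mem_ofPred_eq, Prod.exists, LinearMap.add_apply, LinearMap.comp_apply,
    LinearMap.sub_apply, LinearMap.neg_apply, LinearMap.toSpanSingleton_apply,
    LinearMap.smul_apply, LinearMap.fst_apply, LinearMap.snd_apply, smul_eq_mul, px, py, pl, pu,
    pu', pr, LinearMap.zero_apply, zero_add]
  constructor
  · rintro ⟨y, hy, z, hz, s, t, hs, ht, hst, rfl⟩
    obtain ⟨u, hu⟩ := (h y).1 hy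
    obtain ⟨v, hv⟩ := (h' z).1 hz
    have et : 1 = s + t := hst.symm
    refine ⟨s • y, s, s • u, t • v, ⟨⟨fun w => ?_, fun w => ?_⟩, hs⟩, by linarith⟩
    · have := mul_nonneg hs (hu w)
      simp only [map_smul, LinearMap.smul_apply, smul_eq_mul]
      linarith
    · have := mul_nonneg ht (hv w)
      have e : t = 1 - s := by linarith
      rw [add_sub_cancel_left]
      simp only [map_smul, LinearMap.smul_apply, smul_eq_mul]
      subst e
      linarith
  · rintro ⟨y, s, u, v, ⟨⟨hu, hv⟩, hs⟩, hs1⟩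
    rcases hs.eq_or_lt with rfl | hs
    · have hy : y = 0 := sdr_recession neS bS a A B h y u (by simpa using hu)
      subst hy
      obtain ⟨z, hz⟩ := neS
      refine ⟨z, hz, x, (h' x).2 ⟨v, ?_⟩, right_mem_segment ℝ z x⟩
      intro w
      have := hv w
      simp only [sub_zero] at this
      linarith
    have hs1 : s ≤ 1 := by linarith
    rcases hs1.eq_or_lt with rfl | hs1
    · have hy : x - y = 0 := sdr_recession neT bT a' A' B' h' (x - y) v (by
        intro w
        have := hv w
        linarith)
      have hy : x = y := sub_eq_zero.1 hy
      subst hy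
      obtain ⟨z, hz⟩ := neT
      refine ⟨x, (h x).2 ⟨u, ?_⟩, z, hz, left_mem_segment ℝ x z⟩
      intro w
      have := hu w
      linarith
    have ht : 0 < 1 - s := by linarith
    refine ⟨s⁻¹ • y, (h _).2 ⟨s⁻¹ • u, fun w => ?_⟩, (1 - s)⁻¹ • (x - y),
      (h' _).2 ⟨(1 - s)⁻¹ • v, fun w => ?_⟩, s, 1 - s, hs.le, ht.le, by ring, ?_⟩
    · have := mul_nonneg (inv_nonneg.2 hs.le) (hu w)
      simp only [map_smul, LinearMap.smul_apply, smul_eq_mul]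
      refine this.trans_eq ?_
      field_simp
    · have := mul_nonneg (inv_nonneg.2 ht.le) (hv w)
      simp only [map_smul, LinearMap.smul_apply, smul_eq_mul]
      refine this.trans_eq ?_
      field_simp
      ring
    · rw [smul_inv_smul₀ hs.ne', smul_inv_smul₀ ht.ne']
      abel

theorem SDR.convexHull_biUnion {n : ℕ} {ι : Type*} (s : Finset ι) (S : ι → Set (Rn n))
    (h : ∀ i ∈ s, SDR (S i)) (hb : ∀ i ∈ s, Bornology.IsBounded (S i)) :
    SDR (convexHull ℝ (⋃ i ∈ s, S i)) := by
  classical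
  induction s using Finset.induction_on with
  | empty => simpa using SDR.empty
  | insert a s ha ih =>
    rw [Finset.set_biUnion_insert]
    have h1 := ih (fun i hi => h i (by simp [hi])) (fun i hi => hb i (by simp [hi]))
    have h2 := (h a (by simp)).convexJoin h1 (hb a (by simp)) (by
      rw [isBounded_convexHull, Bornology.isBounded_biUnion_finset]
      exact fun i hi => hb i (by simp [hi]))
    have e : convexHull ℝ (S a ∪ convexHull ℝ (⋃ i ∈ s, S i)) = convexHull ℝ (S a ∪ ⋃ i ∈ s, S i) := by
      apply Subset.antisymm
      · apply convexHull_min _ (convex_convexHull ℝ _)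
        apply union_subset
        · exact subset_union_left.trans (subset_convexHull ℝ _)
        · exact convexHull_mono subset_union_right
      · exact convexHull_mono (union_subset_union_right _ (subset_convexHull ℝ _))
    rwa [e] at h2

end SDRcalc

theorem SDR.isSDPRepresentable {n : ℕ} {S : Set (Rn n)} (hS : SDR S) : IsSDPRepresentable S := by
  obtain ⟨F, W, _, _, _, _, _, _, a, A, B, h⟩ := hS
  let bF := Module.finBasis ℝ F
  let bW := Module.finBasis ℝ W
  let m : (W →ₗ[ℝ] W →ₗ[ℝ] ℝ) →
      Matrix (Fin (Module.finrank ℝ W)) (Fin (Module.finrank ℝ W)) ℝ :=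
    fun c => Matrix.of fun i j => (c (bW i) (bW j) + c (bW j) (bW i)) / 2
  have msymm : ∀ c, (m c).IsSymm := fun c => by
    ext i j; simp [m, add_comm]
  have madd : ∀ c d, m (c + d) = m c + m d := fun c d => by
    ext i j; simp [m]; ring
  have msmul : ∀ (r : ℝ) c, m (r • c) = r • m c := fun r c => by
    ext i j; simp [m]; ring
  let M : (W →ₗ[ℝ] W →ₗ[ℝ] ℝ) →ₗ[ℝ]
      Matrix (Fin (Module.finrank ℝ W)) (Fin (Module.finrank ℝ W)) ℝ :=
    { toFun := m, map_add' := madd, map_smul' := msmul }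
  have mq : ∀ c w, (Finset.univ.sum fun i => Finset.univ.sum fun j =>
      bW.repr w i * m c i j * bW.repr w j) = c w w := fun c w => by
    have e1 : c w w = ∑ i, ∑ j, bW.repr w i * c (bW i) (bW j) * bW.repr w j := by
      conv_lhs => rw [← bW.sum_repr w]
      simp only [map_sum, LinearMap.sum_apply, map_smul, LinearMap.smul_apply, smul_eq_mul,
        Finset.mul_sum]
      rw [Finset.sum_comm]
      refine Finset.sum_congr rfl fun i _ => Finset.sum_congr rfl fun j _ => ?_
      ring
    have e2 : c w w = ∑ i, ∑ j, bW.repr w i * c (bW j) (bW i) * bW.repr w j := by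
      rw [e1, Finset.sum_comm]
      refine Finset.sum_congr rfl fun i _ => Finset.sum_congr rfl fun j _ => ?_
      ring
    have e3 : c w w = (c w w + c w w) / 2 := by ring
    rw [e3]
    nth_rewrite 1 [e1]
    nth_rewrite 1 [e2]
    rw [← Finset.sum_add_distrib, Finset.sum_div]
    refine Finset.sum_congr rfl fun i _ => ?_
    rw [← Finset.sum_add_distrib, Finset.sum_div]
    refine Finset.sum_congr rfl fun j _ => ?_
    simp only [m, Matrix.of_apply]
    ring
  have mpsd : ∀ c, (m c).PosSemidef ↔ ∀ w, 0 ≤ c w w := fun c => by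
    rw [Matrix.posSemidef_iff_dotProduct_mulVec]
    constructor
    · rintro ⟨-, hp⟩ w
      have := hp (bW.repr w)
      rw [← mq]
      refine this.trans_eq ?_
      simp only [dotProduct, Matrix.mulVec, Finset.mul_sum, Pi.star_apply, star_trivial, mul_assoc]
    · intro hp
      refine ⟨?_, fun x => ?_⟩
      · have := msymm c
        rwa [Matrix.IsHermitian, Matrix.conjTranspose_eq_transpose_of_trivial]
      · have := hp (bW.equivFun.symm x)
        rw [← mq] at this
        refine this.trans_eq ?_
        have e : ∀ i, bW.repr (bW.equivFun.symm x) i = x i := fun i => by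
          rw [← bW.equivFun_apply, LinearEquiv.apply_symm_apply]
        simp only [e]
        simp only [dotProduct, Matrix.mulVec, Finset.mul_sum, Pi.star_apply, star_trivial, mul_assoc]
  refine ⟨_, _, m a, fun i => m (A (EuclideanSpace.single i 1)), fun j => m (B (bF j)),
    msymm _, fun _ => msymm _, fun _ => msymm _, ?_⟩
  ext x
  rw [h, mem_ofPred_eq]
  have ex : x = ∑ i, x i • (EuclideanSpace.single i (1:ℝ)) := by
    ext j
    simp [Finset.sum_apply, Pi.single_apply]
  have key : ∀ u : Fin (Module.finrank ℝ F) → ℝ,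
      m a + ∑ i, x i • m (A (EuclideanSpace.single i 1)) + ∑ j, u j • m (B (bF j)) =
      m (a + A x + B (∑ j, u j • bF j)) := fun u => by
    change M a + ∑ i, x i • M (A (EuclideanSpace.single i 1)) + ∑ j, u j • M (B (bF j)) = M _
    conv_rhs => rw [ex]
    simp only [map_add, map_sum, map_smul]
  constructor
  · rintro ⟨u, hu⟩
    refine ⟨bF.repr u, ?_⟩
    rw [key, mpsd, bF.sum_repr]
    simpa using hu
  · rintro ⟨u, hu⟩
    rw [key, mpsd] at hu
    exact ⟨_, hu⟩

/-! ### Pseudo-moment functionals and a local Jensen inequality -/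

section Moments

variable {n : ℕ}

/-- A linear functional on polynomials which is a truncated pseudo-moment functional on the
box of radius `ε` around `x0`. -/
structure Good (x0 : Fin n → ℝ) (ε : ℝ) (d : ℕ) (L : MvPolynomial (Fin n) ℝ →ₗ[ℝ] ℝ) : Prop where
  one : L 1 = 1
  sq : ∀ s : MvPolynomial (Fin n) ℝ, s.totalDegree ≤ d → 0 ≤ L (s * s)
  loc : ∀ (k : Fin n) (s : MvPolynomial (Fin n) ℝ), s.totalDegree ≤ d →
    0 ≤ L ((C (ε ^ 2) - (X k - C (x0 k)) ^ 2) * (s * s))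

/-- The mean of a functional. -/
def mean (L : MvPolynomial (Fin n) ℝ →ₗ[ℝ] ℝ) : Fin n → ℝ := fun k => L (X k)

/-- The centered variable. -/
def Yv (v : Fin n → ℝ) (k : Fin n) : MvPolynomial (Fin n) ℝ := X k - C (v k)

/-- The total variance. -/
def tau (L : MvPolynomial (Fin n) ℝ →ₗ[ℝ] ℝ) : ℝ :=
  ∑ k, L (Yv (mean L) k * Yv (mean L) k)

/-- First order Taylor remainder. -/
def Rem (v : Fin n → ℝ) (p : MvPolynomial (Fin n) ℝ) : MvPolynomial (Fin n) ℝ :=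
  p - C (eval v p) - ∑ i, C (eval v (pderiv i p)) * Yv v i

theorem totalDegree_Yv (v : Fin n → ℝ) (k : Fin n) : (Yv v k).totalDegree ≤ 1 := by
  unfold Yv
  refine (totalDegree_sub _ _).trans ?_
  simp [totalDegree_X]

theorem L_C_mul (L : MvPolynomial (Fin n) ℝ →ₗ[ℝ] ℝ) (a : ℝ) (p : MvPolynomial (Fin n) ℝ) :
    L (C a * p) = a * L p := by
  rw [C_mul', map_smul, smul_eq_mul]

namespace Good

variable {x0 : Fin n → ℝ} {ε : ℝ} {d : ℕ} {L : MvPolynomial (Fin n) ℝ →ₗ[ℝ] ℝ}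

theorem L_C (h : Good x0 ε d L) (a : ℝ) : L (C a) = a := by
  have := L_C_mul L a 1
  rwa [mul_one, h.one, mul_one] at this

theorem L_Yv (h : Good x0 ε d L) (k : Fin n) : L (Yv (mean L) k) = 0 := by
  unfold Yv
  rw [map_sub, h.L_C]
  simp [mean]

theorem cs (h : Good x0 ε d L) {a b : MvPolynomial (Fin n) ℝ} (ha : a.totalDegree ≤ d)
    (hb : b.totalDegree ≤ d) : L (a * b) ^ 2 ≤ L (a * a) * L (b * b) := by
  have key : ∀ t : ℝ, 0 ≤ L (b * b) * (t * t) + (2 * L (a * b)) * t + L (a * a) := by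
    intro t
    have h1 : (a + C t * b).totalDegree ≤ d := by
      refine (totalDegree_add _ _).trans (max_le ha ?_)
      refine (totalDegree_mul _ _).trans ?_
      simpa using hb
    have h2 := h.sq _ h1
    have e : (a + C t * b) * (a + C t * b) = a * a + C (2 * t) * (a * b) + C (t * t) * (b * b) := by
      simp only [C_mul, map_ofNat]
      ring
    rw [e, map_add, map_add, L_C_mul, L_C_mul] at h2
    linarith
  have := discrim_le_zero key
  unfold discrim at this
  nlinarith

theorem Zbound (h : Good x0 ε d L) (k : Fin n) (w : MvPolynomial (Fin n) ℝ)
    (hw : w.totalDegree ≤ d) : L ((Yv x0 k * w) * (Yv x0 k * w)) ≤ ε ^ 2 * L (w * w) := by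
  have h1 := h.loc k w hw
  have e : (C (ε ^ 2) - (X k - C (x0 k)) ^ 2) * (w * w) =
      C (ε ^ 2) * (w * w) - (Yv x0 k * w) * (Yv x0 k * w) := by
    unfold Yv; ring
  rw [e, map_sub, L_C_mul] at h1
  linarith

theorem Xbound (h : Good x0 ε d L) (hε : 0 ≤ ε) (hε1 : ε ≤ 1) (k : Fin n)
    (w : MvPolynomial (Fin n) ℝ)
    (hw : w.totalDegree + 1 ≤ d) :
    L ((X k * w) * (X k * w)) ≤ (2 + 2 * |x0 k|) ^ 2 * L (w * w) := by
  have h1 := h.Zbound k w (by omega)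
  have h2 := h.sq w (by omega)
  have h3 : 0 ≤ L (((Yv x0 k - C (x0 k)) * w) * ((Yv x0 k - C (x0 k)) * w)) := by
    apply h.sq
    refine (totalDegree_mul _ _).trans ?_
    have : (Yv x0 k - C (x0 k)).totalDegree ≤ 1 := by
      refine (totalDegree_sub _ _).trans (max_le (totalDegree_Yv _ _) ?_)
      simp
    omega
  have e : (X k * w) * (X k * w) = C 2 * ((Yv x0 k * w) * (Yv x0 k * w)) +
      C (2 * x0 k ^ 2) * (w * w) -
      ((Yv x0 k - C (x0 k)) * w) * ((Yv x0 k - C (x0 k)) * w) := by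
    unfold Yv
    simp only [C_mul, C_pow, map_ofNat]
    ring
  rw [e, map_sub, map_add, L_C_mul, L_C_mul]
  have h4 : ε ^ 2 ≤ 1 := by nlinarith
  have h5 : (2 + 2 * |x0 k|) ^ 2 = 4 + 8 * |x0 k| + 4 * x0 k ^ 2 := by
    rw [← sq_abs (x0 k)]; ring
  have h6 := abs_nonneg (x0 k)
  have h7 := sq_nonneg (x0 k)
  rw [h5]
  nlinarith [mul_nonneg h6 h2, mul_nonneg h7 h2, mul_le_mul_of_nonneg_right h4 h2]

theorem mean_near (h : Good x0 ε d L) (hd : 1 ≤ d) (hε : 0 ≤ ε) (k : Fin n) :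
    |mean L k - x0 k| ≤ ε := by
  have h1 := h.Zbound k 1 (by simp)
  have h2 := h.cs (a := Yv x0 k) (b := 1) ((totalDegree_Yv _ _).trans hd) (by simp)
  simp only [mul_one, h.one] at h1 h2
  have h3 : L (Yv x0 k) = mean L k - x0 k := by
    unfold Yv; rw [map_sub, h.L_C]; rfl
  rw [h3] at h2
  exact abs_le_of_sq_le_sq (h2.trans h1) hε

theorem tau_nonneg' (h : Good x0 ε d L) (hd : 1 ≤ d) (k : Fin n) :
    0 ≤ L (Yv (mean L) k * Yv (mean L) k) := h.sq _ ((totalDegree_Yv _ _).trans hd)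

theorem tau_nonneg (h : Good x0 ε d L) (hd : 1 ≤ d) : 0 ≤ tau L :=
  Finset.sum_nonneg fun k _ => h.tau_nonneg' hd k

theorem le_tau (h : Good x0 ε d L) (hd : 1 ≤ d) (k : Fin n) :
    L (Yv (mean L) k * Yv (mean L) k) ≤ tau L :=
  Finset.single_le_sum (f := fun k => L (Yv (mean L) k * Yv (mean L) k))
    (fun k _ => h.tau_nonneg' hd k) (Finset.mem_univ k)

/-- basic bound -/
theorem sYY (h : Good x0 ε d L) {s : MvPolynomial (Fin n) ℝ} {e : ℕ} {b : ℝ} (hb : 0 ≤ b)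
    (hs : s.totalDegree ≤ e) (hed : e + 1 ≤ d)
    (hsb : ∀ w : MvPolynomial (Fin n) ℝ, w.totalDegree + e ≤ d →
      L ((s * w) * (s * w)) ≤ b ^ 2 * L (w * w)) (i j : Fin n) :
    |L (s * (Yv (mean L) i * Yv (mean L) j))| ≤ b * tau L := by
  have hd : 1 ≤ d := by omega
  have hY := totalDegree_Yv (mean L)
  have h1 := hsb (Yv (mean L) i) (by have := hY i; omega)
  have h2 := h.cs (a := s * Yv (mean L) i) (b := Yv (mean L) j)
    ((totalDegree_mul _ _).trans (by have := hY i; omega)) ((hY j).trans hd)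
  rw [mul_assoc] at h2
  have h3 := h.le_tau hd i
  have h4 := h.le_tau hd j
  have h5 := h.tau_nonneg' hd i
  have h6 := h.tau_nonneg' hd j
  have h7 := h.tau_nonneg hd
  apply abs_le_of_sq_le_sq _ (mul_nonneg hb h7)
  calc _ ≤ _ := h2
    _ ≤ (b ^ 2 * L (Yv (mean L) i * Yv (mean L) i)) * L (Yv (mean L) j * Yv (mean L) j) :=
      mul_le_mul_of_nonneg_right h1 h6
    _ ≤ (b ^ 2 * tau L) * tau L := by gcongr
    _ = _ := by ring

end Good

theorem eval_lip (x0 : Fin n → ℝ) (p : MvPolynomial (Fin n) ℝ) :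
    ∃ M : ℝ, 0 ≤ M ∧ ∀ (ε : ℝ), 0 ≤ ε → ε ≤ 1 → ∀ v : Fin n → ℝ, (∀ k, |v k - x0 k| ≤ ε) →
      |eval v p - eval x0 p| ≤ M * ε := by
  induction p using MvPolynomial.induction_on with
  | C a => exact ⟨0, le_rfl, fun ε h1 h2 v hv => by simp⟩
  | add p q hp hq =>
    obtain ⟨M, hM, h⟩ := hp
    obtain ⟨M', hM', h'⟩ := hq
    refine ⟨M + M', add_nonneg hM hM', fun ε h1 h2 v hv => ?_⟩
    have a1 := h ε h1 h2 v hv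
    have a2 := h' ε h1 h2 v hv
    rw [abs_le] at a1 a2 ⊢
    simp only [map_add]
    constructor <;> nlinarith
  | mul_X p k hp =>
    obtain ⟨M, hM, h⟩ := hp
    refine ⟨|eval x0 p| + M + |x0 k| * M, by positivity, fun ε h1 h2 v hv => ?_⟩
    have a1 := h ε h1 h2 v hv
    have a2 := hv k
    simp only [map_mul, eval_X]
    have e : eval v p * v k - eval x0 p * x0 k =
        (eval x0 p + (eval v p - eval x0 p)) * (v k - x0 k) + x0 k * (eval v p - eval x0 p) := by
      ring
    rw [e]
    calc _ ≤ |(eval x0 p + (eval v p - eval x0 p)) * (v k - x0 k)|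
          + |x0 k * (eval v p - eval x0 p)| := abs_add_le _ _
      _ ≤ (|eval x0 p| + M) * ε + |x0 k| * (M * ε) := by
        rw [abs_mul, abs_mul]
        gcongr
        refine (abs_add_le _ _).trans ?_
        gcongr
        nlinarith
      _ = _ := by ring

theorem eval_bdd (x0 : Fin n → ℝ) (p : MvPolynomial (Fin n) ℝ) :
    ∃ M : ℝ, 0 ≤ M ∧ ∀ v : Fin n → ℝ, (∀ k, |v k - x0 k| ≤ 1) → |eval v p| ≤ M := by
  obtain ⟨M, hM, h⟩ := eval_lip x0 p
  refine ⟨|eval x0 p| + M, by positivity, fun v hv => ?_⟩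
  have := h 1 zero_le_one le_rfl v hv
  calc |eval v p| = |eval x0 p + (eval v p - eval x0 p)| := by ring_nf
    _ ≤ _ := abs_add_le _ _
    _ ≤ _ := by linarith

theorem Rem_C (v : Fin n → ℝ) (a : ℝ) : Rem v (C a) = 0 := by simp [Rem]

theorem Rem_add (v : Fin n → ℝ) (p q : MvPolynomial (Fin n) ℝ) :
    Rem v (p + q) = Rem v p + Rem v q := by
  simp only [Rem, map_add, add_mul, Finset.sum_add_distrib]
  ring

theorem Rem_mul_X (v : Fin n → ℝ) (p : MvPolynomial (Fin n) ℝ) (k : Fin n) :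
    Rem v (p * X k) = X k * Rem v p + ∑ i, C (eval v (pderiv i p)) * (Yv v k * Yv v i) := by
  have e : ∀ i, C (eval v (pderiv i (p * X k))) * Yv v i =
      C (v k) * (C (eval v (pderiv i p)) * Yv v i) + (if i = k then C (eval v p) * Yv v k else 0) := by
    intro i
    rw [Derivation.leibniz, pderiv_X]
    by_cases hik : i = k
    · subst hik
      simp
      ring
    · simp [hik, Pi.single_apply, Ne.symm hik]
      ring
  have e2 : ∀ i, C (eval v (pderiv i p)) * (Yv v k * Yv v i) =
      X k * (C (eval v (pderiv i p)) * Yv v i) - C (v k) * (C (eval v (pderiv i p)) * Yv v i) := by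
    intro i
    simp only [Yv]; ring
  simp only [Rem, e, e2, Finset.sum_add_distrib, Finset.sum_sub_distrib, ← Finset.mul_sum]
  simp only [Finset.sum_ite_eq', Finset.mem_univ, if_true, map_mul, eval_X, Yv]
  ring

theorem Rem_bound (x0 : Fin n → ℝ) (p : MvPolynomial (Fin n) ℝ) :
    ∃ (K : ℝ) (D : ℕ), 0 ≤ K ∧ ∀ (ε : ℝ) (d : ℕ) (L : MvPolynomial (Fin n) ℝ →ₗ[ℝ] ℝ),
      0 ≤ ε → ε ≤ 1 → Good x0 ε d L → ∀ (s : MvPolynomial (Fin n) ℝ) (e : ℕ) (b : ℝ), 0 ≤ b →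
      s.totalDegree ≤ e → e + D + 1 ≤ d →
      (∀ w : MvPolynomial (Fin n) ℝ, w.totalDegree + e ≤ d →
        L ((s * w) * (s * w)) ≤ b ^ 2 * L (w * w)) →
      |L (s * Rem (mean L) p)| ≤ K * b * tau L := by
  induction p using MvPolynomial.induction_on with
  | C a =>
    refine ⟨0, 0, le_rfl, ?_⟩
    intros
    simp [Rem_C]
  | add p q hp hq =>
    obtain ⟨K, D, hK, h⟩ := hp
    obtain ⟨K', D', hK', h'⟩ := hq
    refine ⟨K + K', max D D', add_nonneg hK hK', ?_⟩
    intro ε d L h0 h1 hG s e b hb hs hed hsb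
    have a1 := h ε d L h0 h1 hG s e b hb hs (by omega) hsb
    have a2 := h' ε d L h0 h1 hG s e b hb hs (by omega) hsb
    rw [Rem_add, mul_add, map_add]
    refine (abs_add_le _ _).trans ?_
    linarith
  | mul_X p k hp =>
    obtain ⟨K, D, hK, h⟩ := hp
    choose M hM hMb using fun i => eval_bdd x0 (pderiv i p)
    refine ⟨K * (2 + 2 * |x0 k|) + ∑ i, M i, D + 1, ?_, ?_⟩
    · have := Finset.sum_nonneg fun i (_ : i ∈ Finset.univ) => hM i
      positivity
    intro ε d L h0 h1 hG s e b hb hs hed hsb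
    have hd : 1 ≤ d := by omega
    have hXk : (X k : MvPolynomial (Fin n) ℝ).totalDegree = 1 := totalDegree_X k
    have a1 := h ε d L h0 h1 hG (s * X k) (e + 1) (b * (2 + 2 * |x0 k|)) (by positivity)
      ((totalDegree_mul _ _).trans (by omega)) (by omega) (by
        intro w hw
        have b1 := hsb (X k * w) (by have := totalDegree_mul (X k) w; omega)
        have b2 := hG.Xbound h0 h1 k w (by omega)
        calc L (s * X k * w * (s * X k * w)) = L (s * (X k * w) * (s * (X k * w))) := by
              congr 1; ring
          _ ≤ _ := b1
          _ ≤ b ^ 2 * ((2 + 2 * |x0 k|) ^ 2 * L (w * w)) := by gcongr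
          _ = _ := by ring)
    have a2 : ∀ i, |L (s * (C (eval (mean L) (pderiv i p)) * (Yv (mean L) k * Yv (mean L) i)))|
        ≤ M i * (b * tau L) := by
      intro i
      have b1 := hG.sYY hb hs (by omega) hsb k i
      have b2 := hMb i (mean L) (fun k => (hG.mean_near hd h0 k).trans h1)
      rw [mul_left_comm, L_C_mul, abs_mul]
      exact mul_le_mul b2 b1 (abs_nonneg _) (hM i)
    rw [Rem_mul_X, mul_add, map_add, Finset.mul_sum, map_sum, ← mul_assoc]
    calc _ ≤ _ := abs_add_le _ _
      _ ≤ K * (b * (2 + 2 * |x0 k|)) * tau L + ∑ i, M i * (b * tau L) := by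
        refine add_le_add a1 ((Finset.abs_sum_le_sum_abs _ _).trans ?_)
        exact Finset.sum_le_sum fun i _ => a2 i
      _ = _ := by rw [← Finset.sum_mul]; ring

theorem Rem_second (x0 : Fin n → ℝ) (p : MvPolynomial (Fin n) ℝ) :
    ∃ (K : ℝ) (D : ℕ), 0 ≤ K ∧ ∀ (ε : ℝ) (d : ℕ) (L : MvPolynomial (Fin n) ℝ →ₗ[ℝ] ℝ),
      0 ≤ ε → ε ≤ 1 → Good x0 ε d L → D + 2 ≤ d →
      |2 * L (Rem (mean L) p) - ∑ i, ∑ j, eval x0 (pderiv i (pderiv j p)) *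
        L (Yv (mean L) i * Yv (mean L) j)| ≤ K * ε * tau L := by
  induction p using MvPolynomial.induction_on with
  | C a =>
    refine ⟨0, 0, le_rfl, ?_⟩
    intros
    simp [Rem_C]
  | add p q hp hq =>
    obtain ⟨K, D, hK, h⟩ := hp
    obtain ⟨K', D', hK', h'⟩ := hq
    refine ⟨K + K', max D D', add_nonneg hK hK', ?_⟩
    intro ε d L h0 h1 hG hd
    have a1 := h ε d L h0 h1 hG (by omega)
    have a2 := h' ε d L h0 h1 hG (by omega)
    simp only [Rem_add, map_add, add_mul, Finset.sum_add_distrib]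
    rw [abs_le] at a1 a2 ⊢
    constructor <;> linarith
  | mul_X p k hp =>
    obtain ⟨K, D, hK, h⟩ := hp
    obtain ⟨K', D', hK', h'⟩ := Rem_bound x0 p
    choose M hM hMb using fun i => eval_lip x0 (pderiv i p)
    refine ⟨|x0 k| * K + 2 * K' + 2 * ∑ i, M i, max D D', ?_, ?_⟩
    · have := Finset.sum_nonneg fun i (_ : i ∈ Finset.univ) => hM i
      positivity
    intro ε d L h0 h1 hG hd
    have hd1 : 1 ≤ d := by omega
    have a1 := h ε d L h0 h1 hG (by omega)
    have a2 := h' ε d L h0 h1 hG (Yv x0 k) 1 ε h0 (totalDegree_Yv _ _) (by omega)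
      (fun w hw => hG.Zbound k w (by omega))
    have a3 : ∀ i, |(eval (mean L) (pderiv i p) - eval x0 (pderiv i p)) *
        L (Yv (mean L) k * Yv (mean L) i)| ≤ M i * (ε * tau L) := by
      intro i
      have b1 := hG.sYY (s := 1) (e := 0) (b := 1) zero_le_one (by simp) (by omega)
        (by intro w _; simp) k i
      have b2 := hMb i ε h0 h1 (mean L) (fun k => (hG.mean_near hd1 h0 k))
      rw [one_mul, one_mul] at b1
      rw [abs_mul, ← mul_assoc]
      exact mul_le_mul b2 b1 (abs_nonneg _) (mul_nonneg (hM i) h0)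
    have e1 : ∀ i j, eval x0 (pderiv i (pderiv j (p * X k))) =
        x0 k * eval x0 (pderiv i (pderiv j p)) + (if i = k then eval x0 (pderiv j p) else 0)
          + (if j = k then eval x0 (pderiv i p) else 0) := by
      intro i j
      simp only [Derivation.leibniz, pderiv_X, map_add, smul_eq_mul, map_mul, eval_X]
      by_cases hik : i = k
      · by_cases hjk : j = k
        · subst hik; subst hjk
          simp
          ring
        · subst hik
          simp [hjk, Pi.single_apply, Ne.symm hjk]
          try ring
      · by_cases hjk : j = k
        · subst hjk
          simp [hik, Pi.single_apply, Ne.symm hik]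
          try ring
        · simp [hik, hjk, Pi.single_apply, Ne.symm hik, Ne.symm hjk]
          try ring
    have e2 : ∑ i, ∑ j, eval x0 (pderiv i (pderiv j (p * X k))) *
        L (Yv (mean L) i * Yv (mean L) j) =
        x0 k * (∑ i, ∑ j, eval x0 (pderiv i (pderiv j p)) * L (Yv (mean L) i * Yv (mean L) j)) +
        2 * ∑ i, eval x0 (pderiv i p) * L (Yv (mean L) k * Yv (mean L) i) := by
      simp only [e1, add_mul, Finset.sum_add_distrib, ite_mul, zero_mul, Finset.sum_ite_eq',
        Finset.mem_univ, if_true]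
      have : ∑ i, ∑ j, (if i = k then eval x0 (pderiv j p) * L (Yv (mean L) i * Yv (mean L) j)
          else 0) = ∑ i, eval x0 (pderiv i p) * L (Yv (mean L) k * Yv (mean L) i) := by
        rw [Finset.sum_comm]
        simp
      rw [this, Finset.mul_sum, two_mul, ← add_assoc]
      congr 1
      · congr 1
        refine Finset.sum_congr rfl fun i _ => ?_
        rw [Finset.mul_sum]
        refine Finset.sum_congr rfl fun j _ => ?_
        ring
      · refine Finset.sum_congr rfl fun i _ => ?_
        rw [mul_comm (Yv (mean L) i)]
    have e3 : L (Rem (mean L) (p * X k)) = x0 k * L (Rem (mean L) p) +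
        L (Yv x0 k * Rem (mean L) p) + ∑ i, eval (mean L) (pderiv i p) *
          L (Yv (mean L) k * Yv (mean L) i) := by
      have : X k * Rem (mean L) p = C (x0 k) * Rem (mean L) p + Yv x0 k * Rem (mean L) p := by
        unfold Yv; ring
      rw [Rem_mul_X, this, map_add, map_add, L_C_mul, map_sum]
      simp only [L_C_mul]
    rw [e2, e3]
    have e4 := (Finset.abs_sum_le_sum_abs _ _).trans
      (Finset.sum_le_sum fun i (_ : i ∈ Finset.univ) => a3 i)
    simp only [sub_mul, Finset.sum_sub_distrib, ← Finset.sum_mul] at e4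
    have a1' := mul_le_mul_of_nonneg_left a1 (abs_nonneg (x0 k))
    rw [← abs_mul] at a1'
    rw [abs_le] at a1' a2 e4 ⊢
    constructor <;> linarith

open scoped MatrixOrder in
theorem posSemidef_factor {A : Matrix (Fin n) (Fin n) ℝ} (hA : A.PosSemidef) :
    ∃ B : Matrix (Fin n) (Fin n) ℝ, A = B.conjTranspose * B := by
  obtain ⟨B, hB⟩ := CStarAlgebra.nonneg_iff_eq_star_mul_self.mp hA.nonneg
  exact ⟨B, hB⟩

theorem jensen (x0 : Fin n → ℝ) (q : MvPolynomial (Fin n) ℝ) (m : ℝ) (hm : 0 < m)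
    (hH : (Matrix.of (fun i j => eval x0 (pderiv i (pderiv j q))) -
      m • (1 : Matrix (Fin n) (Fin n) ℝ)).PosSemidef) :
    ∃ (ε₀ : ℝ) (D : ℕ), 0 < ε₀ ∧ ε₀ ≤ 1 ∧ ∀ (ε : ℝ) (d : ℕ) (L : MvPolynomial (Fin n) ℝ →ₗ[ℝ] ℝ),
      0 ≤ ε → ε ≤ ε₀ → D ≤ d → Good x0 ε d L → eval (mean L) q ≤ L q := by
  obtain ⟨K, D, hK, h⟩ := Rem_second x0 q
  refine ⟨min 1 (m / (K + 1)), D + 2, by positivity, min_le_left _ _, ?_⟩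
  intro ε d L h0 hε hd hG
  have hd1 : 1 ≤ d := by omega
  have a1 := h ε d L h0 (hε.trans (min_le_left _ _)) hG hd
  have hεm : K * ε ≤ m := by
    have h1 : ε ≤ m / (K + 1) := hε.trans (min_le_right _ _)
    rw [le_div_iff₀ (by positivity)] at h1
    nlinarith
  have hτ := hG.tau_nonneg hd1
  have e1 : L q = eval (mean L) q + L (Rem (mean L) q) := by
    have : q = Rem (mean L) q + C (eval (mean L) q) +
        ∑ i, C (eval (mean L) (pderiv i q)) * Yv (mean L) i := by
      unfold Rem; ring
    conv_lhs => rw [this]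
    rw [map_add, map_add, map_sum, hG.L_C]
    simp only [L_C_mul, hG.L_Yv, mul_zero, Finset.sum_const_zero]
    ring
  have e2 : m * tau L ≤ ∑ i, ∑ j, eval x0 (pderiv i (pderiv j q)) *
        L (Yv (mean L) i * Yv (mean L) j) := by
    obtain ⟨B, hB⟩ := posSemidef_factor hH
    have b1 : ∀ i j, eval x0 (pderiv i (pderiv j q)) =
        m * (if i = j then 1 else 0) + ∑ k, B k i * B k j := by
      intro i j
      have := congrFun (congrFun hB i) j
      simp only [Matrix.sub_apply, Matrix.of_apply, Matrix.smul_apply, Matrix.one_apply,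
        Matrix.mul_apply, Matrix.conjTranspose_apply, star_trivial, smul_eq_mul] at this
      linarith
    have b2 : ∑ i, ∑ j, eval x0 (pderiv i (pderiv j q)) *
        L (Yv (mean L) i * Yv (mean L) j) = m * tau L +
        ∑ k, L ((∑ i, C (B k i) * Yv (mean L) i) * (∑ i, C (B k i) * Yv (mean L) i)) := by
      simp only [b1, add_mul, Finset.sum_add_distrib]
      congr 1
      · simp [tau, Finset.mul_sum]
      · have hs : ∀ k, L ((∑ i, C (B k i) * Yv (mean L) i) * (∑ i, C (B k i) * Yv (mean L) i)) =
            ∑ i, ∑ j, L (C (B k i) * Yv (mean L) i * (C (B k j) * Yv (mean L) j)) := by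
          intro k
          rw [Finset.sum_mul_sum]
          simp only [map_sum]
        simp only [hs]
        symm
        rw [Finset.sum_comm]
        refine Finset.sum_congr rfl fun i _ => ?_
        rw [Finset.sum_comm]
        refine Finset.sum_congr rfl fun j _ => ?_
        rw [Finset.sum_mul]
        refine Finset.sum_congr rfl fun k _ => ?_
        have : C (B k i) * Yv (mean L) i * (C (B k j) * Yv (mean L) j) =
          C (B k i * B k j) * (Yv (mean L) i * Yv (mean L) j) := by
          rw [C_mul]; ring
        rw [this, L_C_mul]
    rw [b2]
    have : 0 ≤ ∑ k, L ((∑ i, C (B k i) * Yv (mean L) i) * (∑ i, C (B k i) * Yv (mean L) i)) := by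
      refine Finset.sum_nonneg fun k _ => hG.sq _ ?_
      refine totalDegree_finsetSum_le fun i _ => ?_
      refine (totalDegree_mul _ _).trans ?_
      have := totalDegree_Yv (mean L) i
      simp only [totalDegree_C]
      omega
    linarith
  rw [e1]
  rw [abs_le] at a1
  nlinarith [mul_le_mul_of_nonneg_right hεm hτ]

end Moments

/-! ### Local SDP representability -/

section LocalSDR

variable {n : ℕ}

open scoped MatrixOrder in
theorem posDef_sub {A : Matrix (Fin n) (Fin n) ℝ} (hA : A.PosDef) :
    ∃ m : ℝ, 0 < m ∧ (A - m • (1 : Matrix (Fin n) (Fin n) ℝ)).PosSemidef := by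
  rcases Nat.eq_zero_or_pos n with rfl | hn
  · refine ⟨1, one_pos, ?_⟩
    rw [Subsingleton.elim (A - _) 0]
    exact Matrix.PosSemidef.zero
  have : Nonempty (Fin n) := ⟨⟨0, hn⟩⟩
  obtain ⟨m, hm, h⟩ := (CFC.exists_pos_algebraMap_le_iff (A := Matrix (Fin n) (Fin n) ℝ)
    (a := A) hA.isHermitian).2 (fun x hx => by
      have := (Matrix.isStrictlyPositive_iff_posDef.2 hA)
      exact this.spectrum_pos hx)
  refine ⟨m, hm, ?_⟩
  rw [Algebra.algebraMap_eq_smul_one] at h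
  exact h

theorem local_SDR (x0 : Fin n → ℝ) (q : MvPolynomial (Fin n) ℝ)
    (hH : (Matrix.of (fun i j => eval x0 (pderiv i (pderiv j q)))).PosDef) :
    ∃ ε₀ : ℝ, 0 < ε₀ ∧ ∀ ε : ℝ, 0 < ε → ε ≤ ε₀ →
      SDR {x : Rn n | (∀ k, |x k - x0 k| ≤ ε) ∧ eval (fun i => x i) q ≤ 0} := by
  obtain ⟨m, hm, hPS⟩ := posDef_sub hH
  obtain ⟨ε₀, D, h0, -, hJ⟩ := jensen x0 q m hm hPS
  refine ⟨ε₀, h0, fun ε hε hε0 => ?_⟩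
  set d := D + 1 with hd
  let N := 2 * d + 3 + q.totalDegree
  let U := restrictTotalDegree (Fin n) ℝ N
  let W := restrictTotalDegree (Fin n) ℝ d
  obtain ⟨π, hπ⟩ := LinearMap.exists_leftInverse_of_injective U.subtype
    (LinearMap.ker_eq_bot.2 (Submodule.injective_subtype U))
  have hπ' : ∀ p, p.totalDegree ≤ N → (π p : MvPolynomial (Fin n) ℝ) = p := by
    intro p hp
    have := LinearMap.congr_fun hπ ⟨p, (mem_restrictTotalDegree _ _ _).2 hp⟩
    simp only [LinearMap.comp_apply, Submodule.subtype_apply, LinearMap.id_apply] at this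
    rw [this]
  let ev : MvPolynomial (Fin n) ℝ → (Rn n × Module.Dual ℝ U →ₗ[ℝ] ℝ) := fun p =>
    (Module.Dual.eval ℝ U (π p)).comp (LinearMap.snd ℝ (Rn n) (Module.Dual ℝ U))
  let co : Fin n → (Rn n × Module.Dual ℝ U →ₗ[ℝ] ℝ) := fun i =>
    (LinearMap.proj i ∘ₗ (WithLp.linearEquiv 2 ℝ (Fin n → ℝ)).toLinearMap).comp
      (LinearMap.fst ℝ (Rn n) (Module.Dual ℝ U))
  have hco : ∀ i z, co i z = z.1 i := fun i z => rfl
  have hev : ∀ p z, ev p z = z.2 (π p) := fun p z => rfl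
  have hA : ∀ r : MvPolynomial (Fin n) ℝ, SDR {z : Rn n × Module.Dual ℝ U |
      ∀ w : W, 0 ≤ z.2 (π (r * ((w : MvPolynomial (Fin n) ℝ) * w)))} := by
    intro r
    have := SDR.basic (E := Rn n × Module.Dual ℝ U) (W := W) 0
      (LinearMap.mk₂ ℝ (fun z w => z.2 ∘ₗ π ∘ₗ
        (LinearMap.mulLeft ℝ (r * (w : MvPolynomial (Fin n) ℝ))) ∘ₗ W.subtype)
        (by intros; ext; simp) (by intros; ext; simp) (by intros; ext; simp [mul_add, mul_assoc, add_mul])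
        (by intros; ext; simp [mul_assoc]))
    convert this using 1
    ext z
    simp [mul_assoc]
  have hS := (((((SDR.hyperplane 1 (ev 1)).inter
    (SDR.biInter Finset.univ (fun i => {z | (ev (X i) - co i) z = 0})
      (fun i _ => SDR.hyperplane 0 _))).inter (hA 1)).inter
    (SDR.biInter Finset.univ (fun k : Fin n => {z : Rn n × Module.Dual ℝ U |
      ∀ w : W, 0 ≤ z.2 (π ((C (ε ^ 2) - (X k - C (x0 k)) ^ 2) *
        ((w : MvPolynomial (Fin n) ℝ) * (w : MvPolynomial (Fin n) ℝ))))}) (fun k _ => hA _))).inter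
    (SDR.halfspace 0 (-ev q))).proj
  convert hS using 1
  ext x
  simp only [mem_ofPred_eq, mem_inter_iff, mem_iInter, Finset.mem_univ, true_imp_iff,
    LinearMap.sub_apply, LinearMap.neg_apply, hev, hco, zero_add, one_mul]
  constructor
  · rintro ⟨hx, hq⟩
    refine ⟨(aeval (fun i => x i) : MvPolynomial (Fin n) ℝ →ₐ[ℝ] ℝ).toLinearMap ∘ₗ U.subtype, ?_⟩
    have hg : ∀ p, p.totalDegree ≤ N →
        ((aeval (fun i => x i) : MvPolynomial (Fin n) ℝ →ₐ[ℝ] ℝ).toLinearMap ∘ₗ U.subtype) (π p)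
          = eval (fun i => x i) p := by
      intro p hp
      simp only [LinearMap.comp_apply, Submodule.subtype_apply, hπ' p hp]
      simp [aeval_eq_eval]
    have hw : ∀ w : W, ((w : MvPolynomial (Fin n) ℝ) * w).totalDegree ≤ 2 * d := by
      intro w
      have := (mem_restrictTotalDegree _ _ _).1 w.2
      have h2 := totalDegree_mul (w : MvPolynomial (Fin n) ℝ) w
      omega
    refine ⟨⟨⟨⟨?_, ?_⟩, ?_⟩, ?_⟩, ?_⟩
    · rw [hg 1 (by simp)]; simp
    · intro i
      rw [hg _ (by rw [totalDegree_X]; omega)]; simp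
    · intro w
      rw [hg _ ((hw w).trans (by omega))]
      simpa using mul_self_nonneg _
    · intro k w
      rw [hg]
      · simp only [map_mul, map_sub, map_pow, eval_C, eval_X]
        refine mul_nonneg ?_ (mul_self_nonneg _)
        have := hx k
        have h2 := abs_le.1 this
        nlinarith
      · refine (totalDegree_mul _ _).trans ?_
        have h1 : (C (ε ^ 2) - (X k - C (x0 k)) ^ 2 : MvPolynomial (Fin n) ℝ).totalDegree ≤ 2 := by
          refine (totalDegree_sub _ _).trans (max_le (by rw [totalDegree_C]; omega) ?_)
          refine (totalDegree_pow _ _).trans ?_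
          have := totalDegree_Yv x0 k
          unfold Yv at this
          omega
        have := hw w
        omega
    · rw [hg q (by omega)]
      linarith
  · rintro ⟨g, ⟨⟨⟨h1, hX⟩, hsq⟩, hloc⟩, hq⟩
    have hG : Good x0 ε d (g ∘ₗ π) := by
      refine ⟨h1, fun s hs => ?_, fun k s hs => ?_⟩
      · exact hsq ⟨s, (mem_restrictTotalDegree _ _ _).2 hs⟩
      · exact hloc k ⟨s, (mem_restrictTotalDegree _ _ _).2 hs⟩
    have hmean : mean (g ∘ₗ π) = fun i => x i := by
      ext i
      have := hX i
      simp only [mean, LinearMap.comp_apply]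
      linarith
    constructor
    · intro k
      have := hG.mean_near (by omega) hε.le k
      rwa [hmean] at this
    · have := hJ ε d _ hε.le hε0 (by omega) hG
      rw [hmean] at this
      have h3 : (g ∘ₗ π) q = g (π q) := rfl
      rw [h3] at this
      linarith

end LocalSDR

/-! ### Concavity of polynomials with negative definite Hessian -/

section Concave

variable {n : ℕ}

theorem hasDerivAt_line (p : MvPolynomial (Fin n) ℝ) (v e : Fin n → ℝ) (t : ℝ) :
    HasDerivAt (fun t : ℝ => eval (fun i => v i + t * e i) p)
      (∑ i, e i * eval (fun i => v i + t * e i) (pderiv i p)) t := by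
  induction p using MvPolynomial.induction_on with
  | C a => simpa using hasDerivAt_const t a
  | add p q hp hq =>
    simp only [map_add, mul_add, Finset.sum_add_distrib]
    exact hp.add hq
  | mul_X p k hp =>
    have h1 : HasDerivAt (fun t : ℝ => v k + t * e k) (e k) t := by
      simpa using ((hasDerivAt_id t).mul_const (e k)).const_add (v k)
    have h2 := hp.mul h1
    simp only [map_mul, eval_X]
    refine h2.congr_deriv (Eq.symm ?_)
    have : ∀ i, e i * eval (fun i => v i + t * e i) (pderiv i (p * X k)) =
        (e i * eval (fun i => v i + t * e i) (pderiv i p)) * (v k + t * e k) +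
        (if i = k then eval (fun i => v i + t * e i) p * e k else 0) := by
      intro i
      rw [Derivation.leibniz, pderiv_X]
      by_cases hik : i = k
      · subst hik
        simp
        ring
      · simp [hik, Pi.single_apply, Ne.symm hik]
        ring
    simp only [this, Finset.sum_add_distrib, ← Finset.sum_mul]
    simp

/-- first derivative of the restriction to a line. -/
def dline (p : MvPolynomial (Fin n) ℝ) (v e : Fin n → ℝ) (t : ℝ) : ℝ :=
  ∑ i, e i * eval (fun i => v i + t * e i) (pderiv i p)

theorem hasDerivAt_dline (p : MvPolynomial (Fin n) ℝ) (v e : Fin n → ℝ) (t : ℝ) :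
    HasDerivAt (dline p v e)
      (∑ i, ∑ j, e i * e j * eval (fun i => v i + t * e i) (pderiv j (pderiv i p))) t := by
  have : ∀ i ∈ Finset.univ, HasDerivAt (fun t : ℝ => e i * eval (fun i => v i + t * e i) (pderiv i p))
      (∑ j, e i * e j * eval (fun i => v i + t * e i) (pderiv j (pderiv i p))) t := by
    intro i _
    refine ((hasDerivAt_line (pderiv i p) v e t).const_mul (e i)).congr_deriv ?_
    rw [Finset.mul_sum]
    exact Finset.sum_congr rfl fun j _ => by ring
  exact HasDerivAt.fun_sum this

theorem quad_neg {H : Matrix (Fin n) (Fin n) ℝ} (hH : (-H).PosDef) {e : Fin n → ℝ} (he : e ≠ 0) :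
    ∑ i, ∑ j, e i * e j * H j i < 0 := by
  have h1 := (Matrix.posDef_iff_dotProduct_mulVec.1 hH).2 he
  simp only [star_trivial, dotProduct, Matrix.mulVec, Matrix.neg_apply,
    Finset.mul_sum] at h1
  rw [Finset.sum_comm, ← neg_pos, ← Finset.sum_neg_distrib]
  refine h1.trans_eq (Finset.sum_congr rfl fun i _ => ?_)
  rw [← Finset.sum_neg_distrib]
  exact Finset.sum_congr rfl fun j _ => by ring

/-- Taylor-type estimate: the strict gradient inequality. -/
theorem grad_ineq {B : Set (Rn n)} (hB : Convex ℝ B) (p : MvPolynomial (Fin n) ℝ)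
    (hp : ∀ x ∈ B, (-(phess p x)).PosDef) {v x : Rn n} (hv : v ∈ B) (hx : x ∈ B) (hne : x ≠ v) :
    peval p x < peval p v + ∑ i, pgrad p v i * (x i - v i) := by
  set e : Fin n → ℝ := fun i => x i - v i with he
  have he0 : e ≠ 0 := by
    intro h
    apply hne
    ext i
    have := congrFun h i
    simp only [he, Pi.zero_apply] at this
    linarith
  have hmem : ∀ t ∈ Icc (0 : ℝ) 1, v + t • (x - v) ∈ B := fun t ht =>
    hB.add_smul_sub_mem hv hx ht
  have hd : ∀ t ∈ Ioo (0 : ℝ) 1, deriv (dline p v e) t < 0 := by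
    intro t ht
    rw [(hasDerivAt_dline p v e t).deriv]
    have := quad_neg (hp _ (hmem t (Ioo_subset_Icc_self ht))) he0
    exact this
  have hcont : ContinuousOn (dline p v e) (Icc 0 1) := fun t _ =>
    (hasDerivAt_dline p v e t).continuousAt.continuousWithinAt
  have hanti : StrictAntiOn (dline p v e) (Icc 0 1) :=
    strictAntiOn_of_deriv_neg (convex_Icc 0 1) hcont (by rwa [interior_Icc])
  obtain ⟨c, hc, hc'⟩ := exists_hasDerivAt_eq_slope
    (fun t : ℝ => eval (fun i => v i + t * e i) p) (dline p v e) zero_lt_one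
    (fun t _ => (hasDerivAt_line p v e t).continuousAt.continuousWithinAt)
    (fun t _ => hasDerivAt_line p v e t)
  have h1 : dline p v e c < dline p v e 0 :=
    hanti (left_mem_Icc.2 zero_le_one) (Ioo_subset_Icc_self hc) hc.1
  have h2 : dline p v e 0 = ∑ i, pgrad p v i * (x i - v i) := by
    simp [dline, pgrad, he, mul_comm]
  have h3 : eval (fun i => v i + 1 * e i) p = peval p x := by
    simp [peval, he]
  have h4 : eval (fun i => v i + 0 * e i) p = peval p v := by
    simp [peval]
  rw [h3, h4] at hc'
  simp only [sub_zero, div_one] at hc'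
  linarith

theorem strictConc {B : Set (Rn n)} (hB : Convex ℝ B) (p : MvPolynomial (Fin n) ℝ)
    (hp : ∀ x ∈ B, (-(phess p x)).PosDef) : StrictConcaveOn ℝ B (peval p) := by
  refine ⟨hB, fun x hx y hy hxy a b ha hb hab => ?_⟩
  set z := a • x + b • y with hz
  have hzB : z ∈ B := hB hx hy ha.le hb.le hab
  have e1 : x - z = b • (x - y) := by
    have : a = 1 - b := by linarith
    rw [hz, this]; module
  have e2 : y - z = a • (y - x) := by
    have : b = 1 - a := by linarith
    rw [hz, this]; module
  have hxz : x ≠ z := by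
    intro h
    rw [← sub_eq_zero, e1, smul_eq_zero] at h
    rcases h with h | h
    · exact hb.ne' h
    · exact hxy (sub_eq_zero.1 h)
  have hyz : y ≠ z := by
    intro h
    rw [← sub_eq_zero, e2, smul_eq_zero] at h
    rcases h with h | h
    · exact ha.ne' h
    · exact hxy (sub_eq_zero.1 h).symm
  have g1 := grad_ineq hB p hp hzB hx hxz
  have g2 := grad_ineq hB p hp hzB hy hyz
  have e3 : a * (∑ i, pgrad p z i * (x i - z i)) + b * (∑ i, pgrad p z i * (y i - z i)) = 0 := by
    rw [Finset.mul_sum, Finset.mul_sum, ← Finset.sum_add_distrib]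
    refine Finset.sum_eq_zero fun i _ => ?_
    have : z i = a * x i + b * y i := by simp [hz]
    rw [this]
    have : a = 1 - b := by linarith
    rw [this]; ring
  simp only [smul_eq_mul]
  have m1 := mul_lt_mul_of_pos_left g1 ha
  have m2 := mul_lt_mul_of_pos_left g2 hb
  have : a * peval p z + b * peval p z = peval p z := by rw [← add_mul, hab, one_mul]
  linarith

theorem continuous_peval (p : MvPolynomial (Fin n) ℝ) : Continuous (peval p) := by
  unfold peval
  exact (MvPolynomial.continuous_eval p).comp (by fun_prop)

theorem peval_ballPoly (u : Rn n) (δ : ℝ) (x : Rn n) :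
    peval (ballPoly u δ) x = δ ^ 2 - ‖x - u‖ ^ 2 := by
  simp [peval, ballPoly, EuclideanSpace.norm_sq_eq]

theorem ballPoly_nonneg (u : Rn n) {δ : ℝ} (hδ : 0 < δ) (x : Rn n) :
    0 ≤ peval (ballPoly u δ) x ↔ x ∈ closedBall u δ := by
  rw [peval_ballPoly, mem_closedBall, dist_eq_norm, sub_nonneg, sq_le_sq₀ (norm_nonneg _) hδ.le]

theorem phess_ballPoly (u : Rn n) (δ : ℝ) (x : Rn n) :
    (-(phess (ballPoly u δ) x)).PosDef := by
  have : -(phess (ballPoly u δ) x) = (2 : ℝ) • (1 : Matrix (Fin n) (Fin n) ℝ) := by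
    ext i j
    have h1 : ∀ j k : Fin n, pderiv j ((X k - C (u k)) ^ 2 : MvPolynomial (Fin n) ℝ) =
        if j = k then C 2 * (X j - C (u j)) else 0 := by
      intro j k
      rw [sq, Derivation.leibniz]
      by_cases hjk : j = k
      · subst hjk; simp only [pderiv_X_self, map_sub, pderiv_C, smul_eq_mul, map_ofNat, if_true]; ring
      · simp [hjk, Ne.symm hjk]
    simp only [phess, ballPoly, Matrix.neg_apply, Matrix.of_apply, map_sub, pderiv_C, map_sum, h1,
      Finset.sum_ite_eq, Finset.mem_univ, if_true]
    by_cases hij : i = j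
    · subst hij
      simp [Derivation.leibniz, -map_ofNat]
    · simp [Derivation.leibniz, -map_ofNat, hij, Ne.symm hij]
  rw [this]
  exact Matrix.PosDef.smul Matrix.PosDef.one two_pos

end Concave

/-! ### Gluing and the one-ball result -/

section OneBall

variable {n : ℕ}

theorem sdr_of_concave (C : Set (Rn n)) (hC : IsCompact C) (hconv : Convex ℝ C)
    (P : Finset (MvPolynomial (Fin n) ℝ)) (hne : P.Nonempty)
    (hCP : C = {x | ∀ p ∈ P, 0 ≤ peval p x})
    (hH : ∀ x ∈ C, ∀ p ∈ P, (-(phess p x)).PosDef) : SDR C := by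
  have key : ∀ x0 : Rn n, ∃ ε : ℝ, 0 < ε ∧
      (x0 ∈ C → SDR (C ∩ {x : Rn n | ∀ k, |x k - x0 k| ≤ ε})) := by
    intro x0
    by_cases hx0 : x0 ∈ C
    swap
    · exact ⟨1, one_pos, fun h => absurd h hx0⟩
    have h1 : ∀ᶠ ε in nhdsWithin (0 : ℝ) (Ioi 0), ∀ p ∈ P,
        SDR {x : Rn n | (∀ k, |x k - x0 k| ≤ ε) ∧ 0 ≤ peval p x} := by
      rw [Filter.eventually_all_finset]
      intro p hp
      obtain ⟨ε₀, h0, h⟩ := local_SDR (fun i => x0 i) (-p) (by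
        have := hH x0 hx0 p hp
        convert this using 1
        ext i j
        simp [phess])
      filter_upwards [Ioc_mem_nhdsGT h0] with ε hε
      have := h ε hε.1 hε.2
      simpa [peval] using this
    obtain ⟨ε, hε, hε0⟩ := (h1.and self_mem_nhdsWithin).exists
    refine ⟨ε, hε0, fun _ => ?_⟩
    have := SDR.biInter P _ hε
    convert this using 1
    ext x
    rw [hCP]
    simp only [mem_inter_iff, mem_ofPred_eq, mem_iInter]
    constructor
    · rintro ⟨a, b⟩ p hp
      exact ⟨b, a p hp⟩
    · intro a
      obtain ⟨p, hp⟩ := hne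
      exact ⟨fun p hp => (a p hp).2, (a p hp).1⟩
  choose ε hε hS using key
  obtain ⟨t, htC, ht⟩ := hC.elim_nhds_subcover (fun x => ball x (ε x))
    (fun x _ => ball_mem_nhds x (hε x))
  have h2 := SDR.convexHull_biUnion t (fun x0 => C ∩ {x : Rn n | ∀ k, |x k - x0 k| ≤ ε x0})
    (fun i hi => hS i (htC i hi)) (fun i _ => hC.isBounded.subset inter_subset_left)
  convert h2 using 1
  apply Subset.antisymm
  · intro x hx
    apply subset_convexHull
    obtain ⟨y, hy, hxy⟩ := mem_iUnion₂.1 (ht hx)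
    refine mem_iUnion₂.2 ⟨y, hy, hx, fun k => ?_⟩
    have h3 := PiLp.norm_apply_le (p := 2) (x - y) k
    rw [mem_ball, dist_eq_norm] at hxy
    simp only [PiLp.sub_apply, Real.norm_eq_abs] at h3
    linarith
  · refine convexHull_min ?_ hconv
    exact iUnion₂_subset fun i _ => inter_subset_left

theorem isCompact_hull {T : Set (Rn n)} (hT : IsCompact T) : IsCompact (convexHull ℝ T) := by
  have : convexHull ℝ T = ⋃ k ∈ Finset.range (n + 2),
      (fun q : (Fin k → ℝ) × (Fin k → Rn n) => ∑ i, q.1 i • q.2 i) ''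
        (stdSimplex ℝ (Fin k) ×ˢ Set.pi univ (fun _ => T)) := by
    apply Subset.antisymm
    · intro x hx
      obtain ⟨ι, _, z, w, hz, hz', hw, hw1, hx'⟩ := eq_pos_convex_span_of_mem_convexHull hx
      have hcard := hz'.card_le_finrank_succ
      have hfr := Submodule.finrank_le (vectorSpan ℝ (Set.range z))
      rw [finrank_euclideanSpace_fin] at hfr
      let e := Fintype.equivFin ι
      refine mem_iUnion₂.2 ⟨Fintype.card ι, Finset.mem_range.2 (by omega),
        (w ∘ e.symm, z ∘ e.symm), ⟨⟨fun i => (hw _).le, ?_⟩, fun i _ => hz ⟨_, rfl⟩⟩, ?_⟩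
      · rw [← hw1]
        exact Equiv.sum_comp e.symm w
      · simp only [Function.comp]
        rw [← hx']
        exact Equiv.sum_comp e.symm (fun i => w i • z i)
    · refine iUnion₂_subset fun k _ => ?_
      rintro _ ⟨⟨w, z⟩, ⟨⟨hw, hw1⟩, hz⟩, rfl⟩
      exact (convex_convexHull ℝ T).sum_mem (fun i _ => hw i) hw1
        (fun i _ => subset_convexHull ℝ T (hz i trivial))
  rw [this]
  refine (Finset.range (n + 2)).isCompact_biUnion fun k _ => ?_
  refine ((isCompact_stdSimplex ℝ (Fin k)).prod (isCompact_univ_pi fun _ => hT)).image ?_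
  fun_prop

theorem unit_of_clm (f : Rn n →L[ℝ] ℝ) (hf : f ≠ 0) :
    ∃ l : Rn n, ‖l‖ = 1 ∧ ∃ c : ℝ, c < 0 ∧ ∀ x : Rn n, ∑ i, l i * x i = c * f x := by
  set d := (InnerProductSpace.toDual ℝ (Rn n)).symm f with hd
  have hd0 : d ≠ 0 := by
    intro h
    apply hf
    rw [hd] at h
    simpa using h
  have hn : 0 < ‖d‖ := norm_pos_iff.2 hd0
  refine ⟨(-‖d‖⁻¹) • d, ?_, -‖d‖⁻¹, by simpa using hn, fun x => ?_⟩
  · rw [norm_smul, norm_neg, norm_inv, norm_norm, inv_mul_cancel₀ hn.ne']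
  · have h1 : inner ℝ d x = f x := InnerProductSpace.toDual_symm_apply
    rw [← h1, PiLp.inner_apply, Finset.mul_sum]
    refine Finset.sum_congr rfl fun i _ => ?_
    simp
    ring

theorem max_mem_convexBoundary {T : Set (Rn n)} {f : Rn n →L[ℝ] ℝ} (hf : f ≠ 0) {w : Rn n}
    (hw : w ∈ T) (hmax : ∀ x ∈ T, f x ≤ f w) : w ∈ convexBoundary T := by
  obtain ⟨l, hl, c, hc, h⟩ := unit_of_clm f hf
  refine ⟨hw, l, hl, fun x hx => ?_⟩
  rw [h, h]
  exact mul_le_mul_of_nonpos_left (hmax x hx) hc.le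

/-- The geometric heart: description of `conv T` by finitely many concave polynomials. -/
theorem hull_of_polys {T B : Set (Rn n)} (hT : IsCompact T) (hB : Convex ℝ B) (hTB : T ⊆ B)
    (hns : ¬ T.Subsingleton)
    (hL : ∀ l : Rn n, ‖l‖ = 1 → ∀ v ∈ T, (∀ x ∈ T, (∑ i, l i * v i) ≤ ∑ i, l i * x i) →
      ∃ p : MvPolynomial (Fin n) ℝ, (∀ x ∈ T, 0 ≤ peval p x) ∧ peval p v = 0 ∧
        (∀ i, pgrad p v i = l i) ∧ ∀ x ∈ B, (-(phess p x)).PosDef)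
    (P : Set (MvPolynomial (Fin n) ℝ)) (hP0 : ∀ p ∈ P, ∀ x ∈ T, 0 ≤ peval p x)
    (hP1 : ∀ p ∈ P, ∀ x ∈ B, (-(phess p x)).PosDef)
    (hP2 : ∀ v ∈ convexBoundary T, ∃ p ∈ P, peval p v = 0) :
    convexHull ℝ T = {x ∈ B | ∀ p ∈ P, 0 ≤ peval p x} := by
  have hsub : ∀ p : MvPolynomial (Fin n) ℝ, (∀ x ∈ T, 0 ≤ peval p x) →
      (∀ x ∈ B, (-(phess p x)).PosDef) → ∀ x ∈ convexHull ℝ T, 0 ≤ peval p x := by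
    intro p h0 h1 x hx
    have hc := (strictConc hB p h1).concaveOn.convex_ge 0
    exact (convexHull_min (show T ⊆ {x ∈ B | 0 ≤ peval p x} from fun y hy => ⟨hTB hy, h0 y hy⟩) hc hx).2
  have hCB : convexHull ℝ T ⊆ B := convexHull_min hTB hB
  have hcC : IsCompact (convexHull ℝ T) := isCompact_hull hT
  have hconv := convex_convexHull ℝ T
  rw [Set.not_subsingleton_iff] at hns
  obtain ⟨a, ha, b, hb, hab⟩ := hns
  have hint : (interior (convexHull ℝ T)).Nonempty := by
    rw [interior_convexHull_nonempty_iff_affineSpan_eq_top,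
      AffineSubspace.affineSpan_eq_top_iff_vectorSpan_eq_top_of_nonempty ℝ (Rn n) (Rn n) ⟨a, ha⟩]
    by_contra hV
    have h1 : (vectorSpan ℝ T)ᗮ ≠ ⊥ := by
      rwa [Ne, Submodule.orthogonal_eq_bot_iff]
    obtain ⟨d, hd, hd0⟩ := Submodule.exists_mem_ne_zero_of_ne_bot h1
    have hf : innerSL ℝ d ≠ 0 := by
      intro h
      have := congrArg (fun g => g d) h
      simp at this
      exact hd0 this
    obtain ⟨l, hl, c, hc, h⟩ := unit_of_clm _ hf
    have hconst : ∀ x ∈ T, ∀ y ∈ T, ∑ i, l i * x i = ∑ i, l i * y i := by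
      intro x hx y hy
      rw [h, h]
      have h2 := (Submodule.mem_orthogonal' _ _).1 hd (x -ᵥ y) (vsub_mem_vectorSpan ℝ hx hy)
      rw [vsub_eq_sub, inner_sub_right] at h2
      simp only [innerSL_apply_apply]
      rw [sub_eq_zero.1 h2]
    obtain ⟨p, hp0, hpv, hpg, hph⟩ := hL l hl a ha (fun x hx => (hconst a ha x hx).le)
    have h3 := grad_ineq hB p hph (hTB ha) (hTB hb) hab.symm
    have h4 := hp0 b hb
    have h5 := hconst a ha b hb
    simp only [hpg, mul_sub, Finset.sum_sub_distrib] at h3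
    linarith
  obtain ⟨c, hc⟩ := hint
  apply Subset.antisymm
  · exact fun x hx => ⟨hCB hx, fun p hp => hsub p (hP0 p hp) (hP1 p hp) x hx⟩
  rintro x ⟨hxB, hxP⟩
  by_contra hxC
  have hcC' : c ∈ convexHull ℝ T := interior_subset hc
  obtain ⟨v, hvs, hvf⟩ : (segment ℝ c x ∩ frontier (convexHull ℝ T)).Nonempty := by
    by_contra hemp
    rw [Set.not_nonempty_iff_eq_empty] at hemp
    obtain ⟨y, -, hy1, hy2⟩ := (convex_segment c x).isPreconnected (interior (convexHull ℝ T))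
      (convexHull ℝ T)ᶜ isOpen_interior hcC.isClosed.isOpen_compl (fun y hy => by
        by_contra hyn
        simp only [mem_union, mem_compl_iff, not_or, not_not] at hyn
        have : y ∈ segment ℝ c x ∩ frontier (convexHull ℝ T) :=
          ⟨hy, subset_closure hyn.2, hyn.1⟩
        rw [hemp] at this
        exact this)
      ⟨c, left_mem_segment ℝ c x, hc⟩ ⟨x, right_mem_segment ℝ c x, hxC⟩
    exact hy2 (interior_subset hy1)
  have hvC : v ∈ convexHull ℝ T := hcC.isClosed.frontier_subset hvf
  have hvi : v ∉ interior (convexHull ℝ T) := hvf.2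
  obtain ⟨g, hg⟩ := geometric_hahn_banach_open_point hconv.interior isOpen_interior hvi
  have hg0 : g ≠ 0 := by
    rintro rfl
    simpa using hg c hc
  have hgC : ∀ a ∈ convexHull ℝ T, g a ≤ g v := by
    intro a ha
    have h1 : a ∈ closure (interior (convexHull ℝ T)) := by
      rw [hconv.closure_interior_eq_closure_of_nonempty_interior ⟨c, hc⟩]
      exact subset_closure ha
    have h2 : IsClosed {y | g y ≤ g v} := isClosed_le g.continuous continuous_const
    exact closure_minimal (fun y hy => (hg y hy).le) h2 h1
  obtain ⟨w, hwT, hw⟩ := hT.exists_isMaxOn ⟨a, ha⟩ g.continuous.continuousOn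
  obtain ⟨l, hl, r, hr, h⟩ := unit_of_clm g hg0
  obtain ⟨p, hp0, hpv, hpg, hph⟩ := hL l hl w hwT (fun x hx => by
    rw [h, h]
    exact mul_le_mul_of_nonpos_left (hw hx) hr.le)
  have hvw : v = w := by
    by_contra hne
    have h3 := grad_ineq hB p hph (hTB hwT) (hCB hvC) hne
    have h4 := hsub p hp0 hph v hvC
    simp only [hpg, mul_sub, Finset.sum_sub_distrib, h] at h3
    have h5 := mul_le_mul_of_nonpos_left (hgC w (subset_convexHull ℝ T hwT)) hr.le
    linarith
  have hvB : v ∈ convexBoundary T := by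
    rw [hvw]
    exact max_mem_convexBoundary hg0 hwT hw
  obtain ⟨p, hpP, hp⟩ := hP2 v hvB
  have hcx : c ≠ x := by rintro rfl; exact hxC hcC'
  have hvo : v ∈ openSegment ℝ c x := by
    rw [← insert_endpoints_openSegment] at hvs
    rcases hvs with rfl | rfl | h
    · exact absurd hc hvi
    · exact absurd hvC hxC
    · exact h
  obtain ⟨s, t, hs, ht, hst, hv⟩ := hvo
  have h6 := (strictConc hB p (hP1 p hpP)).2 (hCB hcC') hxB hcx hs ht hst
  rw [hv, hp] at h6
  have h7 := mul_nonneg hs.le (hsub p (hP0 p hpP) (hP1 p hpP) c hcC')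
  have h8 := mul_nonneg ht.le (hxP p hpP)
  simp only [smul_eq_mul] at h6
  linarith

end OneBall

/-! ### Using the PDLH condition -/

section Final

variable {n m1 m2 : ℕ}

/-- The Lagrange combination. -/
def lagr (f : Fin m1 → MvPolynomial (Fin n) ℝ) (g : Fin m2 → MvPolynomial (Fin n) ℝ)
    (lam : Fin m1 → ℝ) (mu : Fin m2 → ℝ) : MvPolynomial (Fin n) ℝ :=
  ∑ k, lam k • f k + ∑ j, mu j • g j

theorem peval_lagr (f : Fin m1 → MvPolynomial (Fin n) ℝ) (g : Fin m2 → MvPolynomial (Fin n) ℝ)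
    (lam : Fin m1 → ℝ) (mu : Fin m2 → ℝ) (x : Rn n) :
    peval (lagr f g lam mu) x = ∑ k, lam k * peval (f k) x + ∑ j, mu j * peval (g j) x := by
  simp [peval, lagr, smul_eval]

theorem pgrad_lagr (f : Fin m1 → MvPolynomial (Fin n) ℝ) (g : Fin m2 → MvPolynomial (Fin n) ℝ)
    (lam : Fin m1 → ℝ) (mu : Fin m2 → ℝ) (x : Rn n) (i : Fin n) :
    pgrad (lagr f g lam mu) x i = ∑ k, lam k * pgrad (f k) x i + ∑ j, mu j * pgrad (g j) x i := by
  simp [pgrad, lagr, smul_eval]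

theorem phess_lagr (f : Fin m1 → MvPolynomial (Fin n) ℝ) (g : Fin m2 → MvPolynomial (Fin n) ℝ)
    (lam : Fin m1 → ℝ) (mu : Fin m2 → ℝ) (x : Rn n) (i j : Fin n) :
    phess (lagr f g lam mu) x i j =
      ∑ k, lam k * phess (f k) x i j + ∑ k, mu k * phess (g k) x i j := by
  simp [phess, lagr, smul_eval]

theorem one_ball (f : Fin m1 → MvPolynomial (Fin n) ℝ) (h : Fin m2 → MvPolynomial (Fin n) ℝ)
    (T : Set (Rn n))
    (hT : T = {x : Rn n | (∀ i, peval (f i) x = 0) ∧ ∀ j, 0 ≤ peval (h j) x})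
    (hcpt : IsCompact T) (u : Rn n) (δ : ℝ) (hδ : 0 < δ) (hP : PDLHAt f h T u δ) :
    SDR (convexHull ℝ (T ∩ closedBall u δ)) := by
  classical
  set T' := T ∩ closedBall u δ with hT'
  have hc' : IsCompact T' := hcpt.inter_right isClosed_closedBall
  by_cases hns : T'.Subsingleton
  · apply SDR.subsingleton
    rcases hns.eq_empty_or_singleton with h0 | ⟨x, h0⟩
    · rw [h0, convexHull_empty]; exact subsingleton_empty
    · rw [h0, convexHull_singleton]; exact subsingleton_singleton
  set g := extFamily h u δ with hg
  have hf0 : ∀ x ∈ T', ∀ k, peval (f k) x = 0 := by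
    intro x hx k
    have := hx.1
    rw [hT] at this
    exact this.1 k
  have hg0 : ∀ x ∈ T', ∀ j, 0 ≤ peval (g j) x := by
    intro x hx j
    have h1 := hx.1
    rw [hT] at h1
    refine Fin.lastCases ?_ (fun j => ?_) j
    · simp only [hg, extFamily, Fin.snoc_last]
      exact (ballPoly_nonneg u hδ x).2 hx.2
    · simp only [hg, extFamily, Fin.snoc_castSucc]
      exact h1.2 j
  have main : ∀ l : Rn n, ‖l‖ = 1 → ∀ v ∈ T', (∀ x ∈ T', (∑ i, l i * v i) ≤ ∑ i, l i * x i) →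
      ∃ p : MvPolynomial (Fin n) ℝ, (∀ x ∈ T', 0 ≤ peval p x) ∧
        (∀ x ∈ T', (∀ j, peval (g j) v = 0 → peval (g j) x = 0) → peval p x = 0) ∧
        (∀ i, pgrad p v i = l i) ∧ ∀ x ∈ closedBall u δ, (-(phess p x)).PosDef := by
    intro l hl v hv hmin
    obtain ⟨lam, mu, hmu, hcs, hgr, hH⟩ := hP l hl δ hδ le_rfl v hv hmin
    refine ⟨lagr f g lam mu, fun x hx => ?_, fun x hx hJ => ?_, fun i => ?_, fun x hx => ?_⟩
    · rw [peval_lagr]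
      refine add_nonneg (Finset.sum_nonneg fun k _ => ?_) (Finset.sum_nonneg fun j _ => ?_)
      · rw [hf0 x hx k, mul_zero]
      · exact mul_nonneg (hmu j) (hg0 x hx j)
    · rw [peval_lagr, Finset.sum_eq_zero, Finset.sum_eq_zero, add_zero]
      · intro j _
        rcases mul_eq_zero.1 (hcs j) with h0 | h0
        · rw [h0, zero_mul]
        · rw [hJ j h0, mul_zero]
      · intro k _
        rw [hf0 x hx k, mul_zero]
    · rw [pgrad_lagr, hgr i]
    · convert hH x hx using 1
      ext i j
      rw [Matrix.neg_apply, phess_lagr, Matrix.of_apply]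
      ring
  let Q : Finset (Fin (m2 + 1)) → MvPolynomial (Fin n) ℝ → Prop := fun J p =>
    (∀ x ∈ T', 0 ≤ peval p x) ∧ (∀ x ∈ T', (∀ j ∈ J, peval (g j) x = 0) → peval p x = 0) ∧
      ∀ x ∈ closedBall u δ, (-(phess p x)).PosDef
  have hch : ∀ J, ∃ p, (∃ p, Q J p) → Q J p := by
    intro J
    by_cases hJ : ∃ p, Q J p
    · obtain ⟨p, hp⟩ := hJ
      exact ⟨p, fun _ => hp⟩
    · exact ⟨0, fun h => absurd h hJ⟩
  choose c hc using hch
  let P : Finset (MvPolynomial (Fin n) ℝ) :=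
    insert (ballPoly u δ) ((Finset.univ.filter fun J => ∃ p, Q J p).image c)
  have hPmem : ∀ p ∈ P, p = ballPoly u δ ∨ ∃ J, Q J p := by
    intro p hp
    rcases Finset.mem_insert.1 hp with hp | hp
    · exact Or.inl hp
    · obtain ⟨J, hJ, rfl⟩ := Finset.mem_image.1 hp
      exact Or.inr ⟨J, hc J (Finset.mem_filter.1 hJ).2⟩
  have hP1 : ∀ p ∈ P, ∀ x ∈ closedBall u δ, (-(phess p x)).PosDef := by
    intro p hp x hx
    rcases hPmem p hp with rfl | ⟨J, hJ⟩
    · exact phess_ballPoly u δ x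
    · exact hJ.2.2 x hx
  have hP0 : ∀ p ∈ P, ∀ x ∈ T', 0 ≤ peval p x := by
    intro p hp x hx
    rcases hPmem p hp with rfl | ⟨J, hJ⟩
    · exact (ballPoly_nonneg u hδ x).2 hx.2
    · exact hJ.1 x hx
  have hP2 : ∀ v ∈ convexBoundary T', ∃ p ∈ P, peval p v = 0 := by
    rintro v ⟨hv, l, hl, hmin⟩
    obtain ⟨p, hp0, hp1, -, hp3⟩ := main l hl v hv hmin
    have hJ : ∃ p, Q (Finset.univ.filter fun j => peval (g j) v = 0) p :=
      ⟨p, hp0, fun x hx hj => hp1 x hx fun j h0 => hj j (by simp [h0]), hp3⟩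
    refine ⟨c (Finset.univ.filter fun j => peval (g j) v = 0), ?_, ?_⟩
    · exact Finset.mem_insert_of_mem (Finset.mem_image_of_mem c (by simpa using hJ))
    · exact (hc _ hJ).2.1 v hv (fun j hj => (Finset.mem_filter.1 hj).2)
  have hull := hull_of_polys hc' (convex_closedBall u δ) inter_subset_right hns
    (fun l hl v hv hmin => by
      obtain ⟨p, hp0, hp1, hp2, hp3⟩ := main l hl v hv hmin
      exact ⟨p, hp0, hp1 v hv (fun j h0 => h0), hp2, hp3⟩) (P : Set (MvPolynomial (Fin n) ℝ))
    hP0 hP1 hP2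
  refine sdr_of_concave _ (isCompact_hull hc') (convex_convexHull ℝ T') P
    ⟨ballPoly u δ, Finset.mem_insert_self _ _⟩ ?_ ?_
  · rw [hull]
    ext x
    constructor
    · exact fun hx => hx.2
    · exact fun hx => ⟨(ballPoly_nonneg u hδ x).1 (hx _ (Finset.mem_insert_self _ _)), hx⟩
  · intro x hx p hp
    exact hP1 p hp x (by rw [hull] at hx; exact hx.1)

theorem isCompact_convexBoundary {T : Set (Rn n)} (hT : IsCompact T) :
    IsCompact (convexBoundary T) := by
  have h1 : IsCompact ((T ×ˢ sphere (0 : Rn n) 1) ∩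
      ⋂ x ∈ T, {q : Rn n × Rn n | ∑ i, q.2 i * q.1 i ≤ ∑ i, q.2 i * x i}) := by
    refine (hT.prod (isCompact_sphere 0 1)).inter_right (isClosed_biInter fun x _ => ?_)
    exact isClosed_le (by fun_prop) (by fun_prop)
  convert h1.image continuous_fst using 1
  ext u
  constructor
  · rintro ⟨hu, l, hl, hmin⟩
    exact ⟨(u, l), ⟨⟨hu, by simpa using hl⟩, mem_iInter₂.2 fun x hx => hmin x hx⟩, rfl⟩
  · rintro ⟨⟨u, l⟩, ⟨⟨hu, hl⟩, hmin⟩, rfl⟩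
    exact ⟨hu, l, by simpa using hl, fun x hx => mem_iInter₂.1 hmin x hx⟩

theorem final_sdr (f : Fin m1 → MvPolynomial (Fin n) ℝ) (h : Fin m2 → MvPolynomial (Fin n) ℝ)
    (T : Set (Rn n))
    (hT : T = {x : Rn n | (∀ i, peval (f i) x = 0) ∧ ∀ j, 0 ≤ peval (h j) x})
    (hcpt : IsCompact T)
    (hpdlh : ∀ u ∈ convexBoundary T, ∃ δu > 0, PDLHAt f h T u δu) :
    SDR (convexHull ℝ T) := by
  by_cases hns : T.Subsingleton
  · apply SDR.subsingleton
    rcases hns.eq_empty_or_singleton with h0 | ⟨x, h0⟩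
    · rw [h0, convexHull_empty]; exact subsingleton_empty
    · rw [h0, convexHull_singleton]; exact subsingleton_singleton
  rw [Set.not_subsingleton_iff] at hns
  obtain ⟨a, ha, b, hb, hab⟩ := hns
  choose! δ hδ hδP using hpdlh
  obtain ⟨t, htB, ht⟩ := (isCompact_convexBoundary hcpt).elim_nhds_subcover
    (fun x => ball x (δ x)) (fun x hx => ball_mem_nhds x (hδ x hx))
  have hbd : ∀ u : Rn n, IsCompact (convexHull ℝ (T ∩ closedBall u (δ u))) := fun u =>
    isCompact_hull (hcpt.inter_right isClosed_closedBall)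
  have h2 := SDR.convexHull_biUnion t (fun u => convexHull ℝ (T ∩ closedBall u (δ u)))
    (fun u hu => one_ball f h T hT hcpt u (δ u) (hδ u (htB u hu)) (hδP u (htB u hu)))
    (fun u _ => (hbd u).isBounded)
  convert h2 using 1
  set D := convexHull ℝ (⋃ u ∈ t, convexHull ℝ (T ∩ closedBall u (δ u))) with hD
  have hDc : IsCompact D := isCompact_hull (t.isCompact_biUnion fun u _ => hbd u)
  have hBD : convexBoundary T ⊆ D := by
    intro v hv
    obtain ⟨u, hu, hvu⟩ := mem_iUnion₂.1 (ht hv)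
    exact subset_convexHull ℝ _ (mem_iUnion₂.2 ⟨u, hu,
      subset_convexHull ℝ _ ⟨hv.1, ball_subset_closedBall hvu⟩⟩)
  have hmax : ∀ φ : Rn n →L[ℝ] ℝ, φ ≠ 0 → ∃ w ∈ D, ∀ x ∈ T, φ x ≤ φ w := by
    intro φ hφ
    obtain ⟨w, hwT, hw⟩ := hcpt.exists_isMaxOn ⟨a, ha⟩ φ.continuous.continuousOn
    exact ⟨w, hBD (max_mem_convexBoundary hφ hwT hw), hw⟩
  obtain ⟨w0, hw0, -⟩ := hmax (innerSL ℝ (a - b)) (by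
    intro h0
    have := congrArg (fun g => g (a - b)) h0
    simp only [innerSL_apply_apply, ContinuousLinearMap.zero_apply, inner_self_eq_zero] at this
    exact hab (sub_eq_zero.1 this))
  apply Subset.antisymm
  · refine convexHull_min (fun x hx => ?_) (convex_convexHull ℝ _)
    by_contra hxD
    obtain ⟨φ, r, h3, h4⟩ := geometric_hahn_banach_closed_point (convex_convexHull ℝ _)
      hDc.isClosed hxD
    have hφ : φ ≠ 0 := by
      rintro rfl
      have := h3 w0 hw0
      simp only [ContinuousLinearMap.zero_apply] at this h4
      linarith
    obtain ⟨w, hw, hw'⟩ := hmax φ hφ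
    have := h3 w hw
    have := hw' x hx
    linarith
  · refine convexHull_min (iUnion₂_subset fun u _ => ?_) (convex_convexHull ℝ T)
    exact convexHull_mono inter_subset_left

end Final

/-- if the PDLH condition holds at every point of the convex boundary
of the compact set `T = {x | f(x) = 0, h(x) ≥ 0}`, then `conv(T)` is SDP representable. -/
theorem isSDPRepresentable_convexHull_of_PDLH {n m1 m2 : ℕ}
    (f : Fin m1 → MvPolynomial (Fin n) ℝ) (h : Fin m2 → MvPolynomial (Fin n) ℝ)
    (T : Set (Rn n))
    (hT : T = {x : Rn n | (∀ i, peval (f i) x = 0) ∧ ∀ j, 0 ≤ peval (h j) x})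
    (hcpt : IsCompact T)
    (hpdlh : ∀ u ∈ convexBoundary T, ∃ δu > 0, PDLHAt f h T u δu) :
    IsSDPRepresentable (convexHull ℝ T) := by
  exact (final_sdr f h T hT hcpt hpdlh).isSDPRepresentable
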